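/- arXiv:2410.13766 — 7 statements merged into one kernel-verified Lean document; each statement's English description precedes it below -/
import Mathlib

section
/- (Grothendieck) Let S be a topological space with a fixed dense subset S₀ ⊆ S, and let C_b(S) be the Banach space of bounded continuous complex-valued functions on S with the supremum norm. Then a set X ⊆ C_b(S) is relatively weakly compact (its closure in the weak topology of C_b(S) is compact) if and only if X is uniformly bounded (bounded in supremum norm) and, for any sequences (f_i)_{i=0}^∞ from X and (x_j)_{j=0}^∞ from S₀, one has lim_i lim_j f_i(x_j) = lim_j lim_i f_i(x_j) whenever both iterated limits exist. -/
/-!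
Necessity is soft: for a weakly relatively compact `X`, the sequence `f_i` has a weak cluster point
`F`, the evaluations at `x_j` have a weak-* cluster point `ψ` by Banach–Alaoglu, and both iterated
limits equal `ψ F`.

For sufficiency it is enough, by Banach–Alaoglu in the bidual, that every point `F` of the weak-*
closure of `X` in the bidual comes from `C_b(S)`. Let `𝓥` be a filter on `X` converging to `F`.
The iterated limit condition extends from sequences to filters
(`IteratedLimitsAgree.filter_limits_eq`); applied to `𝓥` and ultrafilters on `S₀` finer than
`𝓝 x`, it shows that `G x = F (δ_x)` defines a bounded continuous function
(`continuous_of_iteratedLimitsAgree`).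

It remains to see that `F φ = φ G` for every functional `φ` (`limit_eq_of_iteratedLimitsAgree`).
This replaces the usual appeal to the Riesz representation and dominated convergence. If it fails,
the total variation `|φ|` gives the sets `{|f - G| > ε}` mass bounded below for `𝓥`-most `f`.
A finitely additive Fatou argument (`Recurs.step`), which only uses that `|φ|` is monotone and that
`|φ| a + |φ| b ≤ |φ| (a ⊔ b) + |φ| (a ⊓ b)`, yields finite sets `T_0, T_1, … ⊆ X` and points
`x_0, x_1, … ∈ S₀` such that for `i ≤ k` some `f ∈ T_i` has `|f(x_k) - G(x_k)| > ε`, while for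
`i > k` every `f ∈ T_i` has `|f(x_k) - G(x_k)| < ε / 2` (`Recurs.exists_seq`). An ultrafilter on
the index `k` selects one `f_i ∈ T_i`, and the iterated limits of `f_i(x_k)` differ by at least
`ε / 2`.
-/

open Filter Topology BoundedContinuousFunction

/-! ### Necessity -/

section
variable {S : Type*} [TopologicalSpace S]

theorem continuous_weakSpace_apply (φ : StrongDual ℂ (S →ᵇ ℂ)) :
    Continuous fun w : WeakSpace ℂ (S →ᵇ ℂ) => φ ((toWeakSpace ℂ (S →ᵇ ℂ)).symm w) :=
  (WeakDual.eval_continuous φ).comp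
    (NormedSpace.inclusionInDoubleDualWeak ℂ (S →ᵇ ℂ)).continuous

theorem bounded_of_isCompact_closure {X : Set (S →ᵇ ℂ)}
    (h : IsCompact (closure ((toWeakSpace ℂ (S →ᵇ ℂ)) '' X))) :
    ∃ M : ℝ, ∀ f ∈ X, ‖f‖ ≤ M := by
  obtain ⟨C, hC⟩ := banach_steinhaus
    (g := fun f : X => NormedSpace.inclusionInDoubleDual ℂ (S →ᵇ ℂ) (f : S →ᵇ ℂ)) (by
      intro φ
      obtain ⟨C, hC⟩ := (h.image (continuous_weakSpace_apply φ)).isBounded.exists_norm_le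
      refine ⟨C, fun f => ?_⟩
      exact hC _ ⟨_, subset_closure ⟨f, f.2, rfl⟩, by simp⟩)
  refine ⟨C, fun f hf => ?_⟩
  have := hC ⟨f, hf⟩
  rwa [← (NormedSpace.inclusionInDoubleDualLi (E := S →ᵇ ℂ) ℂ).norm_map f]

theorem iterated_limits_eq_of_isCompact_closure {X : Set (S →ᵇ ℂ)}
    (h : IsCompact (closure ((toWeakSpace ℂ (S →ᵇ ℂ)) '' X)))
    (f : ℕ → S →ᵇ ℂ) (x : ℕ → S) (hf : ∀ i, f i ∈ X) (c r : ℕ → ℂ) (a b : ℂ)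
    (hc : ∀ i, Tendsto (fun j => f i (x j)) atTop (𝓝 (c i))) (ha : Tendsto c atTop (𝓝 a))
    (hr : ∀ j, Tendsto (fun i => f i (x j)) atTop (𝓝 (r j))) (hb : Tendsto r atTop (𝓝 b)) :
    a = b := by
  obtain ⟨w, -, hw⟩ := h.ultrafilter_le_nhds' ((hyperfilter ℕ).map fun i => toWeakSpace ℂ _ (f i))
    (Ultrafilter.mem_map.2 (Filter.univ_mem' fun i => subset_closure ⟨_, hf i, rfl⟩))
  set F : S →ᵇ ℂ := (toWeakSpace ℂ (S →ᵇ ℂ)).symm w with hF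
  have hlim (φ : StrongDual ℂ (S →ᵇ ℂ)) :
      Tendsto (fun i => φ (f i)) (hyperfilter ℕ) (𝓝 (φ F)) := by
    have h1 : Tendsto (fun i => toWeakSpace ℂ _ (f i)) (hyperfilter ℕ) (𝓝 w) := hw
    exact ((continuous_weakSpace_apply φ).tendsto w).comp h1
  obtain ⟨ψ, -, hψ⟩ := (WeakDual.isCompact_closedBall (0 : StrongDual ℂ (S →ᵇ ℂ))
    1).ultrafilter_le_nhds' ((hyperfilter ℕ).map fun j =>
      StrongDual.toWeakDual (BoundedContinuousFunction.evalCLM ℂ (x j) : StrongDual ℂ (S →ᵇ ℂ)))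
    (Ultrafilter.mem_map.2 (Filter.univ_mem' fun j => by
      simp only [Set.mem_preimage, Metric.mem_closedBall, dist_zero_right]
      refine ContinuousLinearMap.opNorm_le_bound _ zero_le_one fun g => ?_
      simpa using g.norm_coe_le_norm (x j)))
  have hlim' (g : S →ᵇ ℂ) : Tendsto (fun j => g (x j)) (hyperfilter ℕ) (𝓝 (ψ g)) :=
    ((WeakDual.eval_continuous g).tendsto ψ).comp hψ
  have hat : (hyperfilter ℕ : Filter ℕ) ≤ atTop := Nat.hyperfilter_le_atTop
  have hcψ (i) : c i = ψ (f i) := tendsto_nhds_unique ((hc i).mono_left hat) (hlim' (f i))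
  have hrF (j) : r j = F (x j) :=
    tendsto_nhds_unique ((hr j).mono_left hat) (hlim (BoundedContinuousFunction.evalCLM ℂ (x j)))
  rw [funext hcψ] at ha
  rw [funext hrF] at hb
  exact (tendsto_nhds_unique (ha.mono_left hat) (hlim (WeakDual.toStrongDual ψ))).trans
    (tendsto_nhds_unique (hb.mono_left hat) (hlim' F)).symm

/-! ### The iterated limit condition for filters -/

/-- The two iterated limits of `f_i(x_j)` agree whenever both exist, for all sequences `f_i` in `X`
and `x_j` in `S₀`. -/
def IteratedLimitsAgree (X : Set (S →ᵇ ℂ)) (S₀ : Set S) : Prop :=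
  ∀ (f : ℕ → S →ᵇ ℂ) (x : ℕ → S), (∀ i, f i ∈ X) → (∀ j, x j ∈ S₀) →
    ∀ (c r : ℕ → ℂ) (a b : ℂ),
      (∀ i, Tendsto (fun j => f i (x j)) atTop (𝓝 (c i))) →
      Tendsto c atTop (𝓝 a) →
      (∀ j, Tendsto (fun i => f i (x j)) atTop (𝓝 (r j))) →
      Tendsto r atTop (𝓝 b) →
      a = b

/-- The iterated limit condition passes from sequences to filters: witnessing sequences are chosen
recursively, each new pair `(f, x)` approximating the limits at all earlier pairs. -/
theorem IteratedLimitsAgree.filter_limits_eq {X : Set (S →ᵇ ℂ)} {S₀ : Set S}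
    (H : IteratedLimitsAgree X S₀) {𝓥 : Filter (S →ᵇ ℂ)} {𝓤 : Filter S} [𝓥.NeBot] [𝓤.NeBot]
    (hX : X ∈ 𝓥) (hS : S₀ ∈ 𝓤) {c : (S →ᵇ ℂ) → ℂ} {r : S → ℂ} {a b : ℂ}
    (hc : ∀ᶠ f in 𝓥, Tendsto (fun x => f x) 𝓤 (𝓝 (c f))) (ha : Tendsto c 𝓥 (𝓝 a))
    (hr : ∀ᶠ x in 𝓤, Tendsto (fun f : S →ᵇ ℂ => f x) 𝓥 (𝓝 (r x))) (hb : Tendsto r 𝓤 (𝓝 b)) :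
    a = b := by
  -- The natural number stored with each pair `(f, x)` is the precision index `n`: errors are
  -- below `1 / (n + 1)`.
  obtain ⟨y, hy, hyr⟩ := exists_seq_of_forall_finset_exists
    (α := ℕ × (S →ᵇ ℂ) × S)
    (fun y => y.2.1 ∈ X ∧ y.2.2 ∈ S₀ ∧ Tendsto (fun x => y.2.1 x) 𝓤 (𝓝 (c y.2.1)) ∧
      Tendsto (fun f : S →ᵇ ℂ => f y.2.2) 𝓥 (𝓝 (r y.2.2)) ∧
      dist (c y.2.1) a < 1 / ((y.1 : ℝ) + 1) ∧ dist (r y.2.2) b < 1 / ((y.1 : ℝ) + 1))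
    (fun y z => y.1 < z.1 ∧ dist (y.2.1 z.2.2) (c y.2.1) < 1 / ((z.1 : ℝ) + 1) ∧
      dist (z.2.1 y.2.2) (r y.2.2) < 1 / ((z.1 : ℝ) + 1)) (by
    intro s hs
    obtain ⟨n, hn⟩ : ∃ n : ℕ, ∀ y ∈ s, y.1 < n :=
      ⟨s.sup (fun y => y.1) + 1, fun y hy =>
        Nat.lt_succ_of_le (Finset.le_sup (f := fun y : ℕ × (S →ᵇ ℂ) × S => y.1) hy)⟩
    have hε : (0 : ℝ) < 1 / ((n : ℝ) + 1) := by positivity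
    have h1 : ∀ᶠ f : S →ᵇ ℂ in 𝓥, ∀ y ∈ s,
        dist (f y.2.2) (r y.2.2) < 1 / ((n : ℝ) + 1) :=
      (Finset.eventually_all s).2 fun y hy => Metric.tendsto_nhds.1 (hs y hy).2.2.2.1 _ hε
    have h2 : ∀ᶠ x in 𝓤, ∀ y ∈ s, dist (y.2.1 x) (c y.2.1) < 1 / ((n : ℝ) + 1) :=
      (Finset.eventually_all s).2 fun y hy => Metric.tendsto_nhds.1 (hs y hy).2.2.1 _ hε
    obtain ⟨f, hf⟩ := (((h1.and hX).and hc).and (Metric.tendsto_nhds.1 ha _ hε)).exists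
    obtain ⟨x, hx⟩ := (((h2.and hS).and hr).and (Metric.tendsto_nhds.1 hb _ hε)).exists
    exact ⟨(n, f, x), ⟨hf.1.1.2, hx.1.1.2, hf.1.2, hx.1.2, hf.2, hx.2⟩,
      fun y hy => ⟨hn y hy, hx.1.1.1 y hy, hf.1.1.1 y hy⟩⟩)
  have hmono : StrictMono fun k => (y k).1 := fun m n hmn => (hyr m n hmn).1
  have hsmall : Tendsto (fun k => 1 / (((y k).1 : ℝ) + 1)) atTop (𝓝 0) :=
    (tendsto_one_div_add_atTop_nhds_zero_nat (𝕜 := ℝ)).comp hmono.tendsto_atTop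
  refine H (fun k => (y k).2.1) (fun k => (y k).2.2) (fun k => (hy k).1) (fun k => (hy k).2.1)
    (fun k => c (y k).2.1) (fun k => r (y k).2.2) a b (fun i => ?_) ?_ (fun j => ?_) ?_
  · refine tendsto_iff_dist_tendsto_zero.2 (squeeze_zero' (.of_forall fun _ => dist_nonneg) ?_ hsmall)
    filter_upwards [eventually_gt_atTop i] with j hj using (hyr i j hj).2.1.le
  · exact tendsto_iff_dist_tendsto_zero.2
      (squeeze_zero (fun _ => dist_nonneg) (fun k => (hy k).2.2.2.2.1.le) hsmall)
  · refine tendsto_iff_dist_tendsto_zero.2 (squeeze_zero' (.of_forall fun _ => dist_nonneg) ?_ hsmall)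
    filter_upwards [eventually_gt_atTop j] with i hi using (hyr j i hi).2.2.le
  · exact tendsto_iff_dist_tendsto_zero.2
      (squeeze_zero (fun _ => dist_nonneg) (fun k => (hy k).2.2.2.2.2.le) hsmall)

/-! ### The total variation of a functional -/

/-- The total variation `|φ|` of a bounded functional, evaluated at a nonnegative function `a`:
the supremum of `‖φ h‖` over `|h| ≤ a`. For `a` not nonnegative the set is empty and the value is
the junk value `0`. -/
noncomputable def totalVariation (φ : StrongDual ℂ (S →ᵇ ℂ)) (a : S →ᵇ ℝ) : ℝ :=
  sSup ((fun h : S →ᵇ ℂ => ‖φ h‖) '' {h | ∀ x, ‖h x‖ ≤ a x})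

section
variable (φ : StrongDual ℂ (S →ᵇ ℂ)) {a b : S →ᵇ ℝ}

theorem le_totalVariation {h : S →ᵇ ℂ} (hh : ∀ x, ‖h x‖ ≤ a x) :
    ‖φ h‖ ≤ totalVariation φ a := by
  refine le_csSup ⟨‖φ‖ * ‖a‖, ?_⟩ ⟨h, hh, rfl⟩
  rintro _ ⟨g, hg, rfl⟩
  refine (φ.le_opNorm g).trans (mul_le_mul_of_nonneg_left ?_ (norm_nonneg _))
  exact (BoundedContinuousFunction.norm_le (norm_nonneg a)).2 fun x =>
    (hg x).trans ((le_abs_self _).trans (a.norm_coe_le_norm x))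

theorem totalVariation_le (ha : 0 ≤ a) {C : ℝ}
    (H : ∀ h : S →ᵇ ℂ, (∀ x, ‖h x‖ ≤ a x) → ‖φ h‖ ≤ C) : totalVariation φ a ≤ C := by
  refine csSup_le ⟨_, 0, fun x => by simpa using ha x, rfl⟩ ?_
  rintro _ ⟨h, hh, rfl⟩
  exact H h hh

theorem totalVariation_mono (ha : 0 ≤ a) (hab : a ≤ b) :
    totalVariation φ a ≤ totalVariation φ b :=
  totalVariation_le φ ha fun _ hh => le_totalVariation φ fun x => (hh x).trans (hab x)

/-- A function `|h| ≤ a + b` is split, up to an error of norm at most `η`, into the pieces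
`h a / (a + b + η)` and `h b / (a + b + η)`, dominated by `a` and `b`; the term `η` keeps the
denominators positive. -/
theorem totalVariation_add_le (ha : 0 ≤ a) (hb : 0 ≤ b) :
    totalVariation φ (a + b) ≤ totalVariation φ a + totalVariation φ b := by
  refine totalVariation_le φ (add_nonneg ha hb) fun h hh => ?_
  refine le_of_forall_pos_le_add fun δ hδ => ?_
  obtain ⟨η, hη, hηδ⟩ : ∃ η > 0, ‖φ‖ * η ≤ δ :=
    ⟨δ / (‖φ‖ + 1), by positivity, by
      rw [mul_div_assoc', div_le_iff₀ (by positivity)]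
      nlinarith [norm_nonneg φ]⟩
  have ha' (x) : 0 ≤ a x := ha x
  have hb' (x) : 0 ≤ b x := hb x
  have hpos (x) : 0 < a x + b x + η := by linarith [ha' x, hb' x]
  have hle (x) : ‖h x‖ ≤ a x + b x := hh x
  -- The piece of `h` belonging to `k`, for `k` equal to `a`, `b` and the constant `η`.
  have key (k : S →ᵇ ℝ) (hk : ∀ x, 0 ≤ k x) : ∃ g : S →ᵇ ℂ,
      (∀ x, g x = ((k x / (a x + b x + η) : ℝ) : ℂ) * h x) ∧ ∀ x, ‖g x‖ ≤ k x := by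
    have hbd (x) : ‖((k x / (a x + b x + η) : ℝ) : ℂ) * h x‖ ≤ k x := by
      rw [norm_mul, Complex.norm_real, Real.norm_of_nonneg (div_nonneg (hk x) (hpos x).le),
        div_mul_eq_mul_div, div_le_iff₀ (hpos x)]
      exact mul_le_mul_of_nonneg_left ((hle x).trans (by linarith)) (hk x)
    refine ⟨BoundedContinuousFunction.ofNormedAddCommGroup
      (fun x => ((k x / (a x + b x + η) : ℝ) : ℂ) * h x) ?_ ‖k‖ fun x => (hbd x).trans
        ((le_abs_self _).trans (k.norm_coe_le_norm x)), fun x => rfl, hbd⟩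
    refine (Complex.continuous_ofReal.comp ?_).mul h.continuous
    exact k.continuous.div ((a.continuous.add b.continuous).add continuous_const)
      fun x => (hpos x).ne'
  obtain ⟨g₁, hg₁, hg₁'⟩ := key a ha'
  obtain ⟨g₂, hg₂, hg₂'⟩ := key b hb'
  obtain ⟨g₃, hg₃, hg₃'⟩ := key (BoundedContinuousFunction.const S η) fun _ => hη.le
  have hsum : h = g₁ + g₂ + g₃ := by
    ext x
    have : ((a x + b x + η : ℝ) : ℂ) ≠ 0 := by exact_mod_cast (hpos x).ne'
    simp only [BoundedContinuousFunction.coe_add, Pi.add_apply, hg₁, hg₂, hg₃,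
      BoundedContinuousFunction.const_apply, Complex.ofReal_div, ← add_mul, ← add_div]
    rw [← Complex.ofReal_add, ← Complex.ofReal_add, div_self this, one_mul]
  have h3 : ‖φ g₃‖ ≤ δ := by
    refine (φ.le_opNorm g₃).trans (le_trans ?_ hηδ)
    exact mul_le_mul_of_nonneg_left ((BoundedContinuousFunction.norm_le hη.le).2 hg₃')
      (norm_nonneg _)
  calc ‖φ h‖ = ‖φ g₁ + φ g₂ + φ g₃‖ := by rw [hsum, map_add, map_add]
    _ ≤ ‖φ g₁‖ + ‖φ g₂‖ + ‖φ g₃‖ := norm_add₃_le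
    _ ≤ _ := add_le_add (add_le_add (le_totalVariation φ hg₁') (le_totalVariation φ hg₂')) h3

theorem exists_phase (h : S →ᵇ ℂ) :
    ∃ h' : S →ᵇ ℂ, (∀ x, ‖h' x‖ = ‖h x‖) ∧ φ h' = (‖φ h‖ : ℂ) := by
  obtain ⟨u, hu, hu'⟩ : ∃ u : ℂ, ‖u‖ = 1 ∧ u * φ h = (‖φ h‖ : ℂ) := by
    obtain ⟨u, hu, h⟩ := RCLike.exists_norm_eq_mul_self (φ h)
    exact ⟨u, hu, h.symm⟩
  exact ⟨u • h, fun x => by simp [hu], by simp [hu']⟩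

theorem add_totalVariation_le (ha : 0 ≤ a) (hb : 0 ≤ b) :
    totalVariation φ a + totalVariation φ b ≤ totalVariation φ (a + b) := by
  rw [← le_sub_iff_add_le]
  refine totalVariation_le φ ha fun h hh => ?_
  rw [le_sub_comm]
  refine totalVariation_le φ hb fun k hk => ?_
  rw [le_sub_iff_add_le']
  obtain ⟨h', hh', hφh⟩ := exists_phase φ h
  obtain ⟨k', hk', hφk⟩ := exists_phase φ k
  have := le_totalVariation φ (a := a + b) (h := h' + k') fun x =>
    (norm_add_le _ _).trans (add_le_add ((hh' x).trans_le (hh x)) ((hk' x).trans_le (hk x)))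
  rwa [map_add, hφh, hφk, ← Complex.ofReal_add, Complex.norm_real,
    Real.norm_of_nonneg (by positivity)] at this

/-- The modularity inequality, obtained from superadditivity, the identity `a + b = a ⊓ b + a ⊔ b`
and subadditivity. -/
theorem totalVariation_modular (ha : 0 ≤ a) (hb : 0 ≤ b) :
    totalVariation φ a + totalVariation φ b ≤
      totalVariation φ (a ⊔ b) + totalVariation φ (a ⊓ b) := by
  refine (add_totalVariation_le φ ha hb).trans ?_
  rw [← inf_add_sup a b, add_comm (totalVariation φ (a ⊔ b))]
  exact totalVariation_add_le φ (le_inf ha hb) (ha.trans le_sup_left)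

end

/-! ### A finitely additive Fatou argument -/

/-- The nonnegative function `w` lives where some member of a finite subset of `A` deviates from
`G` by more than `ε`. -/
def Detects (ε : ℝ) (G : S →ᵇ ℂ) (A : Set (S →ᵇ ℂ)) (w : S →ᵇ ℝ) : Prop :=
  0 ≤ w ∧ ∃ T : Finset (S →ᵇ ℂ), (T : Set (S →ᵇ ℂ)) ⊆ A ∧
    ∀ x, 0 < w x → ∃ f ∈ T, ε < ‖f x - G x‖

/-- However far out along `𝓥`, finitely many functions deviate from `G` by more than `ε` on a part
of `W` of `|φ|`-mass at least `d`. -/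
def Recurs (φ : StrongDual ℂ (S →ᵇ ℂ)) (ε : ℝ) (G : S →ᵇ ℂ) (𝓥 : Filter (S →ᵇ ℂ))
    (W : S →ᵇ ℝ) (d : ℝ) : Prop :=
  ∀ A ∈ 𝓥, ∃ w, Detects ε G A w ∧ d ≤ totalVariation φ (W ⊓ w)

section
variable {φ : StrongDual ℂ (S →ᵇ ℂ)} {ε : ℝ} {G : S →ᵇ ℂ} {𝓥 : Filter (S →ᵇ ℂ)}

theorem Detects.mono {A B : Set (S →ᵇ ℂ)} {w : S →ᵇ ℝ} (h : Detects ε G A w) (hAB : A ⊆ B) :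
    Detects ε G B w :=
  let ⟨T, hT, hx⟩ := h.2
  ⟨h.1, T, hT.trans hAB, hx⟩

theorem Detects.sup {A : Set (S →ᵇ ℂ)} {w w' : S →ᵇ ℝ} (h : Detects ε G A w)
    (h' : Detects ε G A w') : Detects ε G A (w ⊔ w') := by
  classical
  obtain ⟨hw, T, hT, hx⟩ := h
  obtain ⟨hw', T', hT', hx'⟩ := h'
  refine ⟨hw.trans le_sup_left, T ∪ T', by simp [hT, hT'], fun x hpos => ?_⟩
  rcases lt_sup_iff.1 (show 0 < w x ⊔ w' x from hpos) with h | h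
  · obtain ⟨f, hf, h⟩ := hx x h
    exact ⟨f, Finset.mem_union_left _ hf, h⟩
  · obtain ⟨f, hf, h⟩ := hx' x h
    exact ⟨f, Finset.mem_union_right _ hf, h⟩

/-- Choose `w` such that `W ⊓ w` nearly exhausts the mass of `W` that can be detected by functions
in `A`. Every later `w'` has mass at least `d` in `W`, and `w ⊔ w'` is still detected in `A`, so by
modularity all but `d - d'` of that mass meets `w`. -/
theorem Recurs.step {W : S →ᵇ ℝ} {d d' : ℝ} (hW : 0 ≤ W) (h : Recurs φ ε G 𝓥 W d) (hd : d' < d)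
    {A : Set (S →ᵇ ℂ)} (hA : A ∈ 𝓥) :
    ∃ w, Detects ε G A w ∧ Recurs φ ε G 𝓥 (W ⊓ w) d' := by
  set V : Set ℝ := (fun w => totalVariation φ (W ⊓ w)) '' {w | Detects ε G A w} with hV
  have hbdd : BddAbove V := by
    refine ⟨totalVariation φ W, ?_⟩
    rintro _ ⟨w, hw, rfl⟩
    exact totalVariation_mono φ (le_inf hW hw.1) inf_le_left
  have hne : V.Nonempty := let ⟨w, hw, _⟩ := h A hA; ⟨_, w, hw, rfl⟩
  obtain ⟨_, ⟨w, hw, rfl⟩, hlt⟩ := exists_lt_of_lt_csSup hne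
    (show sSup V - (d - d') < sSup V by linarith)
  refine ⟨w, hw, fun B hB => ?_⟩
  obtain ⟨w', hw', hdw'⟩ := h (A ∩ B) (inter_mem hA hB)
  refine ⟨w', hw'.mono Set.inter_subset_right, ?_⟩
  have hsup : totalVariation φ (W ⊓ (w ⊔ w')) ≤ sSup V :=
    le_csSup hbdd ⟨_, hw.sup (hw'.mono Set.inter_subset_left), rfl⟩
  have hmod := totalVariation_modular φ (le_inf hW hw.1) (le_inf hW hw'.1)
  have e1 : (W ⊓ w) ⊔ (W ⊓ w') = W ⊓ (w ⊔ w') := by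
    ext x
    exact (inf_sup_left (W x) (w x) (w' x)).symm
  have e2 : (W ⊓ w) ⊓ (W ⊓ w') = (W ⊓ w) ⊓ w' := by
    rw [← inf_inf_distrib_left, inf_assoc]
  rw [e1, e2] at hmod
  linarith

theorem Recurs.exists_pos {W : S →ᵇ ℝ} {d : ℝ} (hW : 0 ≤ W) (hd : 0 < d)
    (h : Recurs φ ε G 𝓥 W d) {S₀ : Set S} (hS₀ : Dense S₀) : ∃ x ∈ S₀, 0 < W x := by
  obtain ⟨w, hw, hdw⟩ := h _ univ_mem
  have hx : ∃ x, 0 < W x := by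
    by_contra! hcon
    have h0 : totalVariation φ (W ⊓ w) ≤ 0 := by
      refine totalVariation_le φ (le_inf hW hw.1) fun g hg => ?_
      have : g = 0 := by
        ext x
        exact norm_le_zero_iff.1 ((hg x).trans (inf_le_left.trans (hcon x)))
      simp [this]
    linarith
  obtain ⟨x, hx, hpos⟩ := hS₀.inter_open_nonempty _ (isOpen_lt continuous_const W.continuous) hx
  exact ⟨x, hpos, hx⟩

/-- Iterating `Recurs.step` gives a decreasing sequence of functions `W_n`, each of them positive at
a point `x_n` and supported where some member of `T_n` is `ε`-far from `G`. The sets `T_i` with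
`i > n` are taken from functions that are `ε / 2`-close to `G` at `x_n`. -/
theorem Recurs.exists_seq {W : S →ᵇ ℝ} {d : ℝ} (hε : 0 < ε) (hW : 0 ≤ W) (hd : 0 < d)
    (h : Recurs φ ε G 𝓥 W d) {S₀ : Set S} (hS₀ : Dense S₀) {X : Set (S →ᵇ ℂ)} (hX : X ∈ 𝓥)
    (hG : ∀ x, Tendsto (fun f : S →ᵇ ℂ => f x) 𝓥 (𝓝 (G x))) :
    ∃ (T : ℕ → Finset (S →ᵇ ℂ)) (x : ℕ → S), (∀ i, ∀ f ∈ T i, f ∈ X) ∧ (∀ k, x k ∈ S₀) ∧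
      (∀ i k, i ≤ k → ∃ f ∈ T i, ε < ‖f (x k) - G (x k)‖) ∧
      ∀ i k, k < i → ∀ f ∈ T i, ‖f (x k) - G (x k)‖ < ε / 2 := by
  -- A state is `(W, B, T, x)`, where `B ∈ 𝓥` is the set from which all later `T` are taken.
  let Q : (S →ᵇ ℝ) × Set (S →ᵇ ℂ) × Finset (S →ᵇ ℂ) × S → Prop := fun p =>
    (0 ≤ p.1 ∧ ∃ d > 0, Recurs φ ε G 𝓥 p.1 d) ∧ p.2.1 ∈ 𝓥 ∧ p.2.1 ⊆ X ∧
      (∀ f ∈ p.2.2.1, f ∈ X) ∧ p.2.2.2 ∈ S₀ ∧ 0 < p.1 p.2.2.2 ∧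
      (∀ z, 0 < p.1 z → ∃ f ∈ p.2.2.1, ε < ‖f z - G z‖) ∧
      ∀ f ∈ p.2.1, ‖f p.2.2.2 - G p.2.2.2‖ < ε / 2
  have step (W : S →ᵇ ℝ) (hW : 0 ≤ W) (hd : ∃ d > 0, Recurs φ ε G 𝓥 W d) (B : Set (S →ᵇ ℂ))
      (hB : B ∈ 𝓥) (hBX : B ⊆ X) :
      ∃ p, Q p ∧ p.1 ≤ W ∧ p.2.1 ⊆ B ∧ ∀ f ∈ p.2.2.1, f ∈ B := by
    obtain ⟨d, hd, h⟩ := hd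
    obtain ⟨w, ⟨hw, T, hTB, hT⟩, hrec⟩ := h.step hW (half_lt_self hd) hB
    have hW' : 0 ≤ W ⊓ w := le_inf hW hw
    obtain ⟨x, hx, hpos⟩ := hrec.exists_pos hW' (half_pos hd) hS₀
    refine ⟨(W ⊓ w, B ∩ {f | ‖f x - G x‖ < ε / 2}, T, x),
      ⟨⟨hW', _, half_pos hd, hrec⟩, ?_, Set.inter_subset_left.trans hBX,
        fun f hf => hBX (hTB hf), hx, hpos, fun z hz => hT z (hz.trans_le inf_le_right),
        fun f hf => hf.2⟩, inf_le_left, Set.inter_subset_left, fun f hf => hTB hf⟩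
    refine inter_mem hB ?_
    filter_upwards [Metric.tendsto_nhds.1 (hG x) _ (half_pos hε)] with f hf
    rwa [dist_eq_norm] at hf
  obtain ⟨p₀, hp₀, -⟩ := step W hW ⟨d, hd, h⟩ X hX subset_rfl
  choose! nxt hnxt using fun p (hp : Q p) => step p.1 hp.1.1 hp.1.2 p.2.1 hp.2.1 hp.2.2.1
  let p : ℕ → (S →ᵇ ℝ) × Set (S →ᵇ ℂ) × Finset (S →ᵇ ℂ) × S := fun n => nxt^[n] p₀
  have hsucc (n) : p (n + 1) = nxt (p n) := Function.iterate_succ_apply' _ _ _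
  have hQ (n) : Q (p n) := by
    induction n with
    | zero => exact hp₀
    | succ n ih => rw [hsucc]; exact (hnxt _ ih).1
  have hanti : Antitone fun n => (p n).1 :=
    antitone_nat_of_succ_le fun n => by rw [hsucc]; exact (hnxt _ (hQ n)).2.1
  have hantiB : Antitone fun n => (p n).2.1 :=
    antitone_nat_of_succ_le fun n => by rw [hsucc]; exact (hnxt _ (hQ n)).2.2.1
  refine ⟨fun n => (p n).2.2.1, fun n => (p n).2.2.2, fun n => (hQ n).2.2.2.1,
    fun n => (hQ n).2.2.2.2.1, fun i k hik => ?_, fun i k hki f hf => ?_⟩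
  · exact (hQ i).2.2.2.2.2.2.1 _ ((hQ k).2.2.2.2.2.1.trans_le (hanti hik _))
  · obtain ⟨i, rfl⟩ : ∃ j, i = j + 1 := ⟨i - 1, by omega⟩
    simp only [hsucc] at hf
    exact (hQ k).2.2.2.2.2.2.2 f (hantiB (Nat.lt_succ_iff.1 hki) ((hnxt _ (hQ i)).2.2.2 f hf))


/-- The detecting function for `f` is `(|f - G| - ε)⁺`, whose mass is at least
`‖φ (f - G)‖ - ‖φ‖ ε`. -/
theorem Recurs.of_eventually [𝓥.NeBot] (hε : 0 ≤ ε) {δ M : ℝ} (hM : 0 ≤ M)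
    (h : ∀ᶠ f in 𝓥, ‖f - G‖ ≤ M ∧ δ ≤ ‖φ (f - G)‖) :
    Recurs φ ε G 𝓥 (BoundedContinuousFunction.const S M) (δ - ‖φ‖ * ε) := by
  intro A hA
  obtain ⟨f, hfA, hfM, hδ⟩ := ((show ∀ᶠ f in 𝓥, f ∈ A from hA).and h).exists
  set w : S →ᵇ ℝ := ((f - G).normComp - BoundedContinuousFunction.const S ε) ⊔ 0 with hw
  have hwx (x) : w x = max (‖f x - G x‖ - ε) 0 := rfl
  have hw0 : 0 ≤ w := le_sup_right
  refine ⟨w, ⟨hw0, {f}, by simpa using hfA, fun x hx => ⟨f, by simp, ?_⟩⟩, ?_⟩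
  · rw [hwx] at hx
    rcases lt_max_iff.1 hx with h | h
    · linarith
    · exact absurd h (lt_irrefl _)
  · have hinf : BoundedContinuousFunction.const S M ⊓ w = w := by
      refine inf_eq_right.2 fun x => ?_
      have h1 : ‖f x - G x‖ ≤ M := ((f - G).norm_coe_le_norm x).trans hfM
      have h2 : w x ≤ M := (hwx x).trans_le (max_le (by linarith) hM)
      exact h2
    have h1 : ‖φ (f - G)‖ ≤ totalVariation φ (w + BoundedContinuousFunction.const S ε) := by
      refine le_totalVariation φ fun x => ?_
      have := le_max_left (‖f x - G x‖ - ε) 0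
      rw [← hwx] at this
      exact sub_le_iff_le_add.1 this
    have hε' : 0 ≤ BoundedContinuousFunction.const S ε := fun _ => hε
    have h2 : totalVariation φ (BoundedContinuousFunction.const S ε) ≤ ‖φ‖ * ε :=
      totalVariation_le φ hε' fun g hg => (φ.le_opNorm g).trans
        (mul_le_mul_of_nonneg_left ((BoundedContinuousFunction.norm_le hε).2 hg) (norm_nonneg _))
    have h3 := totalVariation_add_le φ hw0 hε'
    rw [hinf]
    linarith

end

/-! ### Sufficiency -/

theorem exists_tendsto_of_norm_le {ι : Type*} (u : Ultrafilter ι) {z : ι → ℂ} {M : ℝ}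
    (h : ∀ᶠ i in u, ‖z i‖ ≤ M) : ∃ l, Tendsto z u (𝓝 l) := by
  obtain ⟨l, -, hl⟩ := (isCompact_closedBall (0 : ℂ) M).ultrafilter_le_nhds' (u.map z)
    (Ultrafilter.mem_map.2 (by filter_upwards [h] with i hi using by simpa using hi))
  exact ⟨l, hl⟩

/-- Under the iterated limit condition, pointwise convergence of a filter on `X` to a bounded
continuous function forces weak convergence. -/
theorem limit_eq_of_iteratedLimitsAgree {X : Set (S →ᵇ ℂ)} {S₀ : Set S} (hS₀ : Dense S₀)
    (H : IteratedLimitsAgree X S₀) {M : ℝ} (hM : ∀ f ∈ X, ‖f‖ ≤ M)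
    {𝓥 : Filter (S →ᵇ ℂ)} [𝓥.NeBot] (hX : X ∈ 𝓥) {G : S →ᵇ ℂ}
    (hG : ∀ x, Tendsto (fun f : S →ᵇ ℂ => f x) 𝓥 (𝓝 (G x)))
    (φ : StrongDual ℂ (S →ᵇ ℂ)) {l : ℂ} (hl : Tendsto (fun f => φ f) 𝓥 (𝓝 l)) : l = φ G := by
  by_contra hne
  set δ : ℝ := ‖l - φ G‖ / 2 with hδ
  have hδ0 : 0 < δ := half_pos (norm_pos_iff.2 (sub_ne_zero.2 hne))
  obtain ⟨ε, hε, hφε⟩ : ∃ ε > 0, ‖φ‖ * ε < δ :=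
    ⟨δ / (‖φ‖ + 1), by positivity, by
      rw [mul_div_assoc', div_lt_iff₀ (by positivity)]
      nlinarith [norm_nonneg φ]⟩
  have hev : ∀ᶠ f in 𝓥, ‖f - G‖ ≤ |M| + ‖G‖ ∧ δ ≤ ‖φ (f - G)‖ := by
    have h1 : Tendsto (fun f => ‖φ (f - G)‖) 𝓥 (𝓝 ‖l - φ G‖) := by
      simpa only [map_sub] using (hl.sub_const (φ G)).norm
    filter_upwards [hX, h1.eventually (eventually_gt_nhds (show δ < _ by linarith))] with f hf hf'
    exact ⟨(norm_sub_le _ _).trans (add_le_add_left ((hM f hf).trans (le_abs_self M)) _), hf'.le⟩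
  have hrec := Recurs.of_eventually hε.le (by positivity) hev
  obtain ⟨T, x, hTX, hx, hfar, hnear⟩ := hrec.exists_seq hε
    (fun _ => by simp; positivity) (sub_pos.2 hφε) hS₀ hX hG
  -- The member of `T i` that is `ε`-far from `G` at `x k` depends on `k`; an ultrafilter on `k`
  -- makes the choice uniform.
  have hsel (i) : ∃ f ∈ T i, ∀ᶠ k in hyperfilter ℕ, ε < ‖f (x k) - G (x k)‖ := by
    have h1 : ∀ᶠ k in hyperfilter ℕ, ∃ f ∈ T i, ε < ‖f (x k) - G (x k)‖ :=
      Nat.hyperfilter_le_atTop ((eventually_ge_atTop i).mono fun k hk => hfar i k hk)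
    have h2 : (⋃ f ∈ (T i : Set (S →ᵇ ℂ)), {k | ε < ‖f (x k) - G (x k)‖}) ∈ hyperfilter ℕ := by
      filter_upwards [h1] with k hk
      simpa using hk
    exact (Ultrafilter.finite_biUnion_mem_iff (T i).finite_toSet).1 h2
  choose f hfT hf using hsel
  have hfX (i) : f i ∈ X := hTX i _ (hfT i)
  choose c hc using fun g : S →ᵇ ℂ => exists_tendsto_of_norm_le ((hyperfilter ℕ).map x)
    (.of_forall fun y => g.norm_coe_le_norm y)
  choose r hr using fun y : S => exists_tendsto_of_norm_le (z := fun g : S →ᵇ ℂ => g y) (M := M)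
    ((hyperfilter ℕ).map f) (Ultrafilter.mem_map.2 (univ_mem' fun i =>
      ((f i).norm_coe_le_norm y).trans (hM _ (hfX i))))
  have hcle (i) : ‖c (f i)‖ ≤ M := le_of_tendsto (hc (f i)).norm
    (.of_forall fun y => ((f i).norm_coe_le_norm y).trans (hM _ (hfX i)))
  have hrle (y) : ‖r y‖ ≤ M := le_of_tendsto (hr y).norm (Ultrafilter.mem_map.2
    (univ_mem' fun i => ((f i).norm_coe_le_norm y).trans (hM _ (hfX i))))
  obtain ⟨a, ha⟩ := exists_tendsto_of_norm_le (z := c) (M := M) ((hyperfilter ℕ).map f)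
    (Ultrafilter.mem_map.2 (univ_mem' hcle))
  obtain ⟨b, hb⟩ := exists_tendsto_of_norm_le (z := r) ((hyperfilter ℕ).map x) (.of_forall hrle)
  obtain ⟨γ, hγ⟩ := exists_tendsto_of_norm_le (z := G) ((hyperfilter ℕ).map x)
    (.of_forall G.norm_coe_le_norm)
  have hab : a = b := H.filter_limits_eq (Ultrafilter.mem_map.2 (univ_mem' hfX))
    (Ultrafilter.mem_map.2 (univ_mem' hx)) (.of_forall hc) ha (.of_forall hr) hb
  have hcγ (i) : ε ≤ ‖c (f i) - γ‖ :=
    ge_of_tendsto ((hc (f i)).sub hγ).norm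
      (Ultrafilter.mem_map.2 ((hf i).mono fun k hk => hk.le))
  have haγ : ε ≤ ‖a - γ‖ := ge_of_tendsto (ha.sub_const γ).norm
    (Ultrafilter.mem_map.2 (univ_mem' hcγ))
  have hrγ (k) : ‖r (x k) - G (x k)‖ ≤ ε / 2 :=
    le_of_tendsto ((hr (x k)).sub_const _).norm (Ultrafilter.mem_map.2
      (Nat.hyperfilter_le_atTop ((eventually_gt_atTop k).mono fun i hi =>
        (hnear i k hi _ (hfT i)).le)))
  have hbγ : ‖b - γ‖ ≤ ε / 2 := le_of_tendsto (hb.sub hγ).norm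
    (Ultrafilter.mem_map.2 (univ_mem' hrγ))
  rw [hab] at haγ
  linarith

/-- A pointwise limit of `X` is continuous: along every ultrafilter on `S₀` tending to `x`, the
iterated limit condition identifies the limit of `g` with `g x`, and `S₀` is dense. -/
theorem continuous_of_iteratedLimitsAgree {X : Set (S →ᵇ ℂ)} {S₀ : Set S} (hS₀ : Dense S₀)
    (H : IteratedLimitsAgree X S₀) {M : ℝ} (hM : ∀ f ∈ X, ‖f‖ ≤ M)
    {𝓥 : Filter (S →ᵇ ℂ)} [𝓥.NeBot] (hX : X ∈ 𝓥) {g : S → ℂ}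
    (hg : ∀ x, Tendsto (fun f : S →ᵇ ℂ => f x) 𝓥 (𝓝 (g x))) :
    Continuous g ∧ ∀ x, ‖g x‖ ≤ M := by
  have hbd (x) : ‖g x‖ ≤ M := le_of_tendsto (hg x).norm
    (by filter_upwards [hX] with f hf using (f.norm_coe_le_norm x).trans (hM f hf))
  refine ⟨?_, hbd⟩
  have key (x) : Tendsto g (𝓝[S₀] x) (𝓝 (g x)) := by
    refine tendsto_iff_ultrafilter _ _ _ |>.2 fun u hu => ?_
    obtain ⟨b, hb⟩ := exists_tendsto_of_norm_le u (.of_forall hbd)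
    have hux : (u : Filter S) ≤ 𝓝 x := hu.trans nhdsWithin_le_nhds
    have : g x = b := H.filter_limits_eq hX (hu self_mem_nhdsWithin) (c := fun f => f x)
      (.of_forall fun f => (f.continuous.tendsto x).mono_left hux) (hg x) (.of_forall hg) hb
    rwa [this]
  have h := continuous_extendFrom hS₀ fun x => ⟨_, key x⟩
  have he : extendFrom S₀ g = g := funext fun x => extendFrom_eq (hS₀ x) (key x)
  rwa [he] at h

theorem isCompact_closure_of_iteratedLimitsAgree {X : Set (S →ᵇ ℂ)} {S₀ : Set S} (hS₀ : Dense S₀)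
    (H : IteratedLimitsAgree X S₀) {M : ℝ} (hM : ∀ f ∈ X, ‖f‖ ≤ M) :
    IsCompact (closure ((toWeakSpace ℂ (S →ᵇ ℂ)) '' X)) := by
  refine NormedSpace.isCompact_closure_of_isBounded ℂ (S →ᵇ ℂ) _ ?_ ?_
  · rw [Set.preimage_image_eq _ (toWeakSpace ℂ (S →ᵇ ℂ)).injective]
    exact isBounded_iff_forall_norm_le.2 ⟨M, hM⟩
  · intro F hF
    rw [← Set.image_comp, mem_closure_iff_nhdsWithin_neBot] at hF
    set ι := NormedSpace.inclusionInDoubleDualWeak ℂ (S →ᵇ ℂ) ∘ toWeakSpace ℂ (S →ᵇ ℂ) with hι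
    set 𝓥 : Filter (S →ᵇ ℂ) := comap ι (𝓝[ι '' X] F) ⊓ 𝓟 X with h𝓥
    have hne : 𝓥.NeBot := comap_inf_principal_neBot_of_image_mem hF self_mem_nhdsWithin
    have hX : X ∈ 𝓥 := mem_inf_of_right (mem_principal_self X)
    have hlim (φ : StrongDual ℂ (S →ᵇ ℂ)) : Tendsto (fun f => φ f) 𝓥 (𝓝 (F φ)) := by
      have h1 : Tendsto ι 𝓥 (𝓝 F) :=
        (tendsto_comap.mono_left inf_le_left).mono_right nhdsWithin_le_nhds
      exact ((WeakDual.eval_continuous φ).tendsto F).comp h1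
    have hpt (x : S) : Tendsto (fun f : S →ᵇ ℂ => f x) 𝓥
        (𝓝 (F (BoundedContinuousFunction.evalCLM ℂ x))) := hlim _
    obtain ⟨hcont, hbd⟩ := continuous_of_iteratedLimitsAgree hS₀ H hM hX hpt
    let G : S →ᵇ ℂ := BoundedContinuousFunction.ofNormedAddCommGroup
      (fun x => F (BoundedContinuousFunction.evalCLM ℂ x)) hcont M hbd
    refine ⟨toWeakSpace ℂ (S →ᵇ ℂ) G, ?_⟩
    refine ContinuousLinearMap.ext fun φ => ?_
    exact (limit_eq_of_iteratedLimitsAgree hS₀ H hM hX (G := G) hpt φ (hlim φ)).symm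

end

/-- **Grothendieck's double-limit criterion.** Let `S` be a topological space with a dense
subset `S₀`. A set `X` of bounded continuous complex-valued functions on `S` is relatively
compact in the weak topology of `C_b(S)` if and only if `X` is uniformly bounded and the two
iterated limits `lim_i lim_j f_i(x_j)` and `lim_j lim_i f_i(x_j)` agree whenever both exist,
for all sequences `(f_i)` from `X` and `(x_j)` from `S₀`. -/
theorem grothendieck_double_limit {S : Type*} [TopologicalSpace S]
    (S₀ : Set S) (hS₀ : Dense S₀) (X : Set (S →ᵇ ℂ)) :
    IsCompact (closure ((toWeakSpace ℂ (S →ᵇ ℂ)) '' X)) ↔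
      ((∃ M : ℝ, ∀ f ∈ X, ‖f‖ ≤ M) ∧
        ∀ (f : ℕ → S →ᵇ ℂ) (x : ℕ → S), (∀ i, f i ∈ X) → (∀ j, x j ∈ S₀) →
          ∀ (c r : ℕ → ℂ) (a b : ℂ),
            (∀ i, Tendsto (fun j => f i (x j)) atTop (𝓝 (c i))) →
            Tendsto c atTop (𝓝 a) →
            (∀ j, Tendsto (fun i => f i (x j)) atTop (𝓝 (r j))) →
            Tendsto r atTop (𝓝 b) →
            a = b) := by
  constructor
  · exact fun h => ⟨bounded_of_isCompact_closure h, fun f x hf _ c r a b hc ha hr hb =>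
      iterated_limits_eq_of_isCompact_closure h f x hf c r a b hc ha hr hb⟩
  · rintro ⟨⟨M, hM⟩, H⟩
    exact isCompact_closure_of_iteratedLimitsAgree hS₀ H hM
end

section
/- Let S be a G-flow. The following are equivalent: (i) S has a unique minimal subflow; (ii) every generic open subset of S contains a generic point; (iii) the set of generic points in S is nonempty, closed, G-invariant, and minimal among such sets (i.e., it is the unique minimal subflow of S). -/
/-!
The key point is that the set of generic points is the intersection of all subflows
(`isGenericPt_iff`). This follows from `isGenericSet_iff`: an open set `U` is generic iff it meets
every subflow, because the complement of the union of all translates of `U` is closed and invariant,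
and an open cover of `S` by translates of `U` has a finite subcover.

Hence the generic points form a subflow as soon as there is one of them, and this subflow, lying
inside every other, is then the unique minimal one; (ii) provides a generic point when applied to
the generic open set `S`. If there is a unique minimal subflow, it is contained in every subflow,
since every subflow contains a minimal one by Zorn's lemma (`exists_minimal_subflow`), so it is the
intersection of all subflows. Finally, if the generic points form a subflow, each generic open set
meets it.
-/

set_option linter.unusedSectionVars false

variable {G : Type*} [Group G] {S : Type*} [TopologicalSpace S] [CompactSpace S] [T2Space S]
  [Nonempty S] [MulAction G S] [ContinuousConstSMul G S]

/-- A subset `X` of a `G`-flow `S` is generic if finitely many `G`-translates of `X`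
cover `S`. -/
def IsGenericSet (G : Type*) [Group G] {S : Type*} [MulAction G S] (X : Set S) : Prop :=
  ∃ F : Finset G, (⋃ g ∈ F, (fun x => g • x) '' X) = Set.univ

/-- A point `x` of a `G`-flow `S` is generic if every open set containing `x` is generic. -/
def IsGenericPt (G : Type*) [Group G] {S : Type*} [TopologicalSpace S] [MulAction G S]
    (x : S) : Prop :=
  ∀ U : Set S, IsOpen U → x ∈ U → IsGenericSet G U

/-- A subflow of a `G`-flow `S`: a nonempty closed `G`-invariant subset. -/
def IsSubflow (G : Type*) [Group G] {S : Type*} [TopologicalSpace S] [MulAction G S]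
    (K : Set S) : Prop :=
  K.Nonempty ∧ IsClosed K ∧ ∀ g : G, ∀ x ∈ K, g • x ∈ K

/-- A minimal subflow of a `G`-flow `S`: a subflow not properly containing a subflow. -/
def IsMinimalSubflow (G : Type*) [Group G] {S : Type*} [TopologicalSpace S] [MulAction G S]
    (K : Set S) : Prop :=
  IsSubflow G K ∧ ∀ K' : Set S, IsSubflow G K' → K' ⊆ K → K' = K

/-- An open set is generic iff it meets every subflow; compactness of `S` is used from right to
left. -/
lemma isGenericSet_iff {U : Set S} (hU : IsOpen U) :
    IsGenericSet G U ↔ ∀ K : Set S, IsSubflow G K → (K ∩ U).Nonempty := by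
  constructor
  · rintro ⟨F, hF⟩ K ⟨⟨k, hk⟩, -, hinv⟩
    have hmem : k ∈ ⋃ g ∈ F, (fun x => g • x) '' U := hF ▸ Set.mem_univ k
    simp only [Set.mem_iUnion] at hmem
    obtain ⟨g, -, u, hu, rfl⟩ := hmem
    exact ⟨u, by simpa using hinv g⁻¹ _ hk, hu⟩
  · intro h
    have hopen : ∀ g : G, IsOpen ((fun x : S => g • x) '' U) :=
      fun g => isOpenMap_smul g U hU
    have hcover : (Set.univ : Set S) ⊆ ⋃ g : G, (fun x : S => g • x) '' U := by
      by_contra hne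
      -- The points outside all translates of `U` would form a subflow disjoint from `U`.
      have hsub : IsSubflow G (⋃ g : G, (fun x : S => g • x) '' U)ᶜ := by
        refine ⟨?_, (isOpen_iUnion hopen).isClosed_compl, ?_⟩
        · obtain ⟨x, -, hx⟩ := Set.not_subset.1 hne
          exact ⟨x, hx⟩
        · intro g x hx hgx
          apply hx
          obtain ⟨a, u, hu, hau⟩ := Set.mem_iUnion.1 hgx
          refine Set.mem_iUnion.2 ⟨g⁻¹ * a, u, hu, ?_⟩
          have hau' : a • u = g • x := hau
          simp [mul_smul, hau']
      obtain ⟨x, hx, hxU⟩ := h _ hsub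
      exact hx (Set.mem_iUnion.2 ⟨1, x, hxU, one_smul G x⟩)
    obtain ⟨F, hF⟩ := isCompact_univ.elim_finite_subcover _ hopen hcover
    exact ⟨F, Set.univ_subset_iff.1 hF⟩

lemma isGenericPt_iff {x : S} : IsGenericPt G x ↔ ∀ K : Set S, IsSubflow G K → x ∈ K := by
  constructor
  · intro hx K hK
    by_contra hxK
    have hgen := hx Kᶜ hK.2.1.isOpen_compl hxK
    obtain ⟨y, hy, hyc⟩ := (isGenericSet_iff hK.2.1.isOpen_compl).1 hgen K hK
    exact hyc hy
  · intro h U hU hxU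
    exact (isGenericSet_iff hU).2 fun K hK => ⟨x, h K hK, hxU⟩

lemma exists_minimal_subflow {K : Set S} (hK : IsSubflow G K) :
    ∃ M ⊆ K, IsMinimalSubflow G M := by
  obtain ⟨M, hMK, hM⟩ := zorn_superset_nonempty {L : Set S | IsSubflow G L} (by
    intro c hc hchain hne
    refine ⟨⋂₀ c, ⟨?_, isClosed_sInter fun L hL => (hc hL).2.1, ?_⟩,
      fun L hL => Set.sInter_subset_of_mem hL⟩
    · have : Nonempty c := hne.to_subtype
      exact IsCompact.nonempty_sInter_of_directed_nonempty_isCompact_isClosed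
        (fun A hA B hB => (hchain.total hA hB).elim
          (fun h => ⟨A, hA, Set.Subset.rfl, h⟩) (fun h => ⟨B, hB, h, Set.Subset.rfl⟩))
        (fun L hL => (hc hL).1)
        (fun L hL => (hc hL).2.1.isCompact) (fun L hL => (hc hL).2.1)
    · exact fun g x hx L hL => (hc hL).2.2 g x (hx L hL)) K hK
  exact ⟨M, hMK, hM.prop, fun L hL hLM => hLM.antisymm (hM.le_of_le hL hLM)⟩

/-- If a generic point exists, the generic points form a subflow contained in every subflow, hence
the unique minimal one. -/
lemma generic_unique_minimal (h : ∃ x : S, IsGenericPt G x) :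
    IsMinimalSubflow G {x : S | IsGenericPt G x} ∧
      ∀ K : Set S, IsMinimalSubflow G K → K = {x : S | IsGenericPt G x} := by
  have hle : ∀ K : Set S, IsSubflow G K → {x : S | IsGenericPt G x} ⊆ K :=
    fun K hK x hx => isGenericPt_iff.1 hx K hK
  have hsub : IsSubflow G {x : S | IsGenericPt G x} := by
    refine ⟨h, ?_, ?_⟩
    · have heq : {x : S | IsGenericPt G x} = ⋂₀ {K : Set S | IsSubflow G K} := by
        ext x
        exact isGenericPt_iff
      rw [heq]
      exact isClosed_sInter fun K hK => hK.2.1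
    · exact fun g x hx => isGenericPt_iff.2 fun K hK => hK.2.2 g x (isGenericPt_iff.1 hx K hK)
  exact ⟨⟨hsub, fun K hK hKs => hKs.antisymm (hle K hK)⟩,
    fun K hK => (hK.2 _ hsub (hle K hK.1)).symm⟩

/-- For a `G`-flow `S`, the following are equivalent: (i) `S` has a unique minimal subflow;
(ii) every generic open subset of `S` contains a generic point; (iii) the set of generic
points of `S` is the unique minimal subflow of `S`. -/
theorem unique_minimal_subflow_iff_generic :
    ((∃! K : Set S, IsMinimalSubflow G K) ↔
      (∀ U : Set S, IsOpen U → IsGenericSet G U → ∃ x ∈ U, IsGenericPt G x)) ∧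
    ((∀ U : Set S, IsOpen U → IsGenericSet G U → ∃ x ∈ U, IsGenericPt G x) ↔
      (IsMinimalSubflow G {x : S | IsGenericPt G x} ∧
        ∀ K : Set S, IsMinimalSubflow G K → K = {x : S | IsGenericPt G x})) := by
  have h12 : (∃! K : Set S, IsMinimalSubflow G K) → ∃ x : S, IsGenericPt G x := by
    rintro ⟨K, hK, huniq⟩
    obtain ⟨x, hx⟩ := hK.1.1
    refine ⟨x, isGenericPt_iff.2 fun L hL => ?_⟩
    obtain ⟨M, hML, hM⟩ := exists_minimal_subflow hL
    exact hML (huniq M hM ▸ hx)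
  have h32 : (∃ x : S, IsGenericPt G x) →
      ∀ U : Set S, IsOpen U → IsGenericSet G U → ∃ x ∈ U, IsGenericPt G x := by
    intro h U hU hgen
    obtain ⟨x, hx, hxU⟩ := (isGenericSet_iff hU).1 hgen _ (generic_unique_minimal h).1.1
    exact ⟨x, hxU, hx⟩
  have h2 : (∀ U : Set S, IsOpen U → IsGenericSet G U → ∃ x ∈ U, IsGenericPt G x) →
      ∃ x : S, IsGenericPt G x := by
    intro h
    obtain ⟨x, -, hx⟩ := h Set.univ isOpen_univ
      ((isGenericSet_iff isOpen_univ).2 fun K hK => by simpa using hK.1)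
    exact ⟨x, hx⟩
  exact ⟨⟨fun h => h32 (h12 h), fun h => ⟨_, generic_unique_minimal (h2 h)⟩⟩,
    fun h => generic_unique_minimal (h2 h), fun h => h32 h.1.1.1⟩
end

section
/- Let G be a group, μ a left-invariant finitely additive probability measure on G, and A ⊆ G. Define φ : G → [0,1] by φ(x) = μ(A ∩ xA), and let S be the closure of the G-orbit of φ in the product space [0,1]^G, where G acts on [0,1]^G by (g·ψ)(x) = ψ(g⁻¹x). Then S (a compact Hausdorff space on which G acts by homeomorphisms) is a weakly almost periodic G-flow. -/
/-!
Write `v_x` for the indicator of `xA` in the Hilbert space `L²(μ)`, so that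
`⟪v_g, v_x⟫ = μ(gA ∩ xA) = φ(g⁻¹x)`. The translate `g • φ` is then `x ↦ ⟪v_g, v_x⟫`, and the orbit
closure `S` is identified with the weak closure of `{v_g}` in the closed span of the `v_x`. Since `μ`
is only finitely additive, the Hilbert space is built as the reproducing kernel Hilbert space of the
kernel `μ(xA ∩ yA)` (`overlap_posSemidef`, `exists_overlap_vectors`, `exists_weak_embedding`).

If the orbit of `f ∈ C(S)` has the form `s ↦ ⟪Φ s, u g⟫`, with `Φ` bounded and weakly continuous and
`u` bounded in a Hilbert space (`HilbertRep`), then it is the image of a bounded set of that space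
under a bounded operator into `C(S)`, hence relatively weakly compact
(`HilbertRep.weakUltraConv`). Coordinate functions have this form, and the class is closed under sums
(direct sums of Hilbert spaces) and products (Hilbert tensor products), so it contains the algebra
generated by the coordinates. Using tensor products for the products avoids the theorems of Eberlein
and Grothendieck on weak compactness in `C(S)`. By Stone-Weierstrass this algebra is dense, and
relative weak compactness of orbits passes to uniform limits (`isClosed_weakUltraConv`).
-/

set_option linter.unusedSectionVars false

/-- A left-invariant finitely additive probability measure on a group `G`. -/
structure LIFAPM (G : Type*) [Group G] where
  m : Set G → ℝ
  nonneg : ∀ X : Set G, 0 ≤ m X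
  le_one : ∀ X : Set G, m X ≤ 1
  empty : m (∅ : Set G) = 0
  univ : m (Set.univ : Set G) = 1
  additive : ∀ X Y : Set G, Disjoint X Y → m (X ∪ Y) = m X + m Y
  left_invariant : ∀ (g : G) (X : Set G), m ((fun x => g * x) '' X) = m X

variable {G : Type*} [Group G]

/-- The translation action of `G` on `[0,1]^G`: `(g • ψ)(x) = ψ(g⁻¹x)`. -/
def transAct (g : G) (ψ : G → Set.Icc (0 : ℝ) 1) : G → Set.Icc (0 : ℝ) 1 :=
  fun x => ψ (g⁻¹ * x)

/-- The function `φ(x) = μ(A ∩ xA)`, as an element of `[0,1]^G`. -/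
noncomputable def phiFn (μ : LIFAPM G) (A : Set G) : G → Set.Icc (0 : ℝ) 1 :=
  fun x => ⟨μ.m (A ∩ (fun a => x * a) '' A), μ.nonneg _, μ.le_one _⟩

/-- The orbit closure of `φ` in `[0,1]^G`: the underlying space of the `G`-flow `S`. -/
noncomputable def orbClosure (μ : LIFAPM G) (A : Set G) : Set (G → Set.Icc (0 : ℝ) 1) :=
  closure (Set.range fun g : G => transAct g (phiFn μ A))

theorem transAct_comp (g h : G) (ψ : G → Set.Icc (0 : ℝ) 1) :
    transAct g (transAct h ψ) = transAct (g * h) ψ := by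
  funext x
  simp [transAct, mul_inv_rev, mul_assoc]

theorem transAct_mem (μ : LIFAPM G) (A : Set G) (g : G) {ψ : G → Set.Icc (0 : ℝ) 1}
    (hψ : ψ ∈ orbClosure μ A) : transAct g ψ ∈ orbClosure μ A := by
  have hc : Continuous (transAct g) := continuous_pi fun x => continuous_apply (g⁻¹ * x)
  have h1 : transAct g '' (Set.range fun h : G => transAct h (phiFn μ A)) ⊆
      Set.range fun h : G => transAct h (phiFn μ A) := by
    rintro _ ⟨_, ⟨h, rfl⟩, rfl⟩
    exact ⟨g * h, (transAct_comp g h (phiFn μ A)).symm⟩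
  exact closure_mono h1 (image_closure_subset_closure_image hc ⟨ψ, hψ, rfl⟩)

/-- The `G`-action on the orbit closure of `φ`. -/
noncomputable def transActS (μ : LIFAPM G) (A : Set G) (g : G) (ψ : orbClosure μ A) :
    orbClosure μ A :=
  ⟨transAct g ↑ψ, transAct_mem μ A g ψ.2⟩

theorem transActS_continuous (μ : LIFAPM G) (A : Set G) (g : G) :
    Continuous (transActS μ A g) := by
  apply Continuous.subtype_mk
  exact (continuous_pi fun x => continuous_apply (g⁻¹ * x)).comp continuous_subtype_val

/-- The `G`-action on the orbit closure of `φ`, as a continuous self-map. -/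
noncomputable def transActSCM (μ : LIFAPM G) (A : Set G) (g : G) :
    C(orbClosure μ A, orbClosure μ A) :=
  ⟨transActS μ A g, transActS_continuous μ A g⟩

instance (μ : LIFAPM G) (A : Set G) : CompactSpace (orbClosure μ A) :=
  isCompact_iff_compactSpace.mp (IsClosed.isCompact isClosed_closure)

open Filter Topology
open scoped TensorProduct

/-! ### Weak relative compactness through ultrafilters -/

/-- Every ultrafilter on the index type makes the family `F` converge weakly to some element of `X`.
This implies that the range of `F` is relatively weakly compact. -/
def WeakUltraConv {ι X : Type*} [NormedAddCommGroup X] [NormedSpace ℂ X] (F : ι → X) : Prop :=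
  ∀ 𝒰 : Ultrafilter ι, ∃ x : X, ∀ L : StrongDual ℂ X, Tendsto (fun i => L (F i)) 𝒰 (𝓝 (L x))

/-- The family extends to a continuous map from the compact space of ultrafilters on `ι` to `X` with
its weak topology, and the image of that extension is a compact set containing the range. -/
theorem WeakUltraConv.isCompact_closure {ι X : Type*} [NormedAddCommGroup X] [NormedSpace ℂ X]
    {F : ι → X} (hF : WeakUltraConv F) :
    IsCompact (closure (toWeakSpace ℂ X '' Set.range F)) := by
  let _ : TopologicalSpace ι := ⊥
  have : DiscreteTopology ι := ⟨rfl⟩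
  set f : ι → WeakSpace ℂ X := fun i => toWeakSpace ℂ X (F i) with hf
  have h (b : Ultrafilter ι) : ∃ c, Tendsto f (comap pure (𝓝 b)) (𝓝 c) := by
    obtain ⟨x, hx⟩ := hF b
    refine ⟨toWeakSpace ℂ X x, ?_⟩
    refine Tendsto.mono_left ?_ (ultrafilter_comap_pure_nhds b)
    refine (WeakBilin.tendsto_iff_forall_eval_tendsto _ ?_).2 hx
    intro a b hab
    exact (SeparatingDual.eq_iff_forall_dual_eq (R := ℂ)).2 fun g => DFunLike.congr_fun hab g
  have hc : Continuous (isDenseInducing_pure.extend f) := isDenseInducing_pure.continuous_extend h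
  refine (isCompact_range hc).closure_of_subset ?_
  rintro _ ⟨_, ⟨i, rfl⟩, rfl⟩
  exact ⟨pure i, isDenseInducing_pure.extend_eq continuous_of_discreteTopology i⟩

/-- Weak relative compactness survives norm limits. If `u n → f` and `x n` is the weak limit of
`F (u n)` along an ultrafilter, then `‖x n - x m‖ ≤ ‖u n - u m‖` because the norm is weakly lower
semicontinuous, so `x n` converges in norm, and its limit is the weak limit of `F f`. -/
theorem isClosed_weakUltraConv {ι X : Type*} [NormedAddCommGroup X] [NormedSpace ℂ X]
    [CompleteSpace X] (F : X → ι → X) (hF : ∀ f f₂ i, ‖F f i - F f₂ i‖ ≤ ‖f - f₂‖) :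
    IsClosed {f | WeakUltraConv (F f)} := by
  refine isClosed_of_closure_subset fun f hf 𝒰 => ?_
  obtain ⟨u, hu, hlim⟩ := mem_closure_iff_seq_limit.1 hf
  choose x hx using fun n => hu n 𝒰
  have hle (n m : ℕ) : ‖x n - x m‖ ≤ ‖u n - u m‖ := by
    obtain ⟨L, hL, hLx⟩ := exists_dual_vector'' ℂ (x n - x m)
    have h1 : Tendsto (fun i => ‖L (F (u n) i - F (u m) i)‖) 𝒰 (𝓝 ‖L (x n - x m)‖) := by
      simp only [map_sub]
      exact ((hx n L).sub (hx m L)).norm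
    rw [hLx] at h1
    have h2 := le_of_tendsto h1 (Eventually.of_forall fun i =>
      ((L.le_of_opNorm_le hL _).trans_eq (one_mul _)).trans (hF (u n) (u m) i))
    simpa using h2
  have hC : CauchySeq x := by
    have := hlim.cauchySeq
    rw [Metric.cauchySeq_iff] at this ⊢
    intro ε hε
    obtain ⟨N, hN⟩ := this ε hε
    exact ⟨N, fun m hm n hn => by
      have := hN m hm n hn
      rw [dist_eq_norm] at this ⊢
      exact (hle m n).trans_lt this⟩
  obtain ⟨y, hy⟩ := cauchySeq_tendsto_of_complete hC
  refine ⟨y, fun L => ?_⟩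
  have hunif : TendstoUniformly (fun n i => L (F (u n) i)) (fun i => L (F f i)) atTop := by
    rw [Metric.tendstoUniformly_iff]
    intro ε hε
    have h0 : Tendsto (fun n => ‖L‖ * ‖f - u n‖) atTop (𝓝 0) := by
      have := (tendsto_const_nhds (x := f)).sub hlim
      simpa using this.norm.const_mul ‖L‖
    filter_upwards [h0.eventually (gt_mem_nhds hε)] with n hn i
    rw [dist_eq_norm, ← map_sub]
    exact (L.le_opNorm _).trans_lt
      ((mul_le_mul_of_nonneg_left (hF _ _ _) (norm_nonneg _)).trans_lt hn)
  exact (hunif.tendstoUniformlyOnFilter.mono_right le_top).tendsto_of_eventually_tendsto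
    (Eventually.of_forall fun n => hx n L) ((L.continuous.tendsto y).comp hy)

/-! ### Families of functions with a Hilbert space representation -/

/-- The functions `F g` factor through a Hilbert space: `F g s = ⟪Φ s, u g⟫` with `u` bounded and
`Φ` bounded and continuous for the weak topology. The Hilbert space is taken in the universe of `ι`
and `S`, so that the existential quantifier is available. -/
def HilbertRep.{u} {ι S : Type u} [TopologicalSpace S] (F : ι → S → ℂ) : Prop :=
  ∃ (E : Type u) (_ : NormedAddCommGroup E) (_ : InnerProductSpace ℂ E) (_ : CompleteSpace E)
    (Φ : S → E) (u : ι → E) (C : ℝ),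
    (∀ s, ‖Φ s‖ ≤ C) ∧ (∀ g, ‖u g‖ ≤ C) ∧ (∀ e, Continuous fun s => inner ℂ (Φ s) e) ∧
    ∀ g s, F g s = inner ℂ (Φ s) (u g)

/-- A bounded map into an inner product space is weakly continuous as soon as its inner products with
the elements of a total set `t` are continuous. -/
theorem weaklyContinuous_of_dense {S E : Type*} [TopologicalSpace S]
    [NormedAddCommGroup E] [InnerProductSpace ℂ E] {Φ : S → E} {C : ℝ} (hC : ∀ s, ‖Φ s‖ ≤ C)
    {t : Set E} (ht : (Submodule.span ℂ t).topologicalClosure = ⊤)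
    (h : ∀ e ∈ t, Continuous fun s => inner ℂ (Φ s) e) (e : E) :
    Continuous fun s => inner ℂ (Φ s) e := by
  have he : e ∈ closure (Submodule.span ℂ t : Set E) := by
    rw [← Submodule.topologicalClosure_coe, ht]; trivial
  obtain ⟨w, hw, hlim⟩ := mem_closure_iff_seq_limit.1 he
  have hcont (v : E) (hv : v ∈ Submodule.span ℂ t) : Continuous fun s => inner ℂ (Φ s) v := by
    induction hv using Submodule.span_induction with
    | mem x hx => exact h x hx
    | zero => simpa using continuous_const
    | add x y _ _ hx hy => simpa only [inner_add_right] using hx.fun_add hy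
    | smul a x _ hx => simpa only [inner_smul_right] using hx.const_mul a
  have hunif : TendstoUniformly (fun n s => inner ℂ (Φ s) (w n)) (fun s => inner ℂ (Φ s) e)
      atTop := by
    rw [Metric.tendstoUniformly_iff]
    intro ε hε
    have h0 : Tendsto (fun n => C * ‖e - w n‖) atTop (𝓝 0) := by
      have := (tendsto_const_nhds (x := e)).sub hlim
      simpa using this.norm.const_mul C
    filter_upwards [h0.eventually (gt_mem_nhds hε)] with n hn s
    rw [dist_eq_norm, ← inner_sub_right]
    exact (norm_inner_le_norm _ _).trans_lt
      ((mul_le_mul_of_nonneg_right (hC s) (norm_nonneg _)).trans_lt hn)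
  exact hunif.continuous (Frequently.of_forall fun n => hcont _ (hw n))

/-- Weak compactness of balls in a Hilbert space, from Banach-Alaoglu and the Riesz isomorphism. -/
theorem exists_weak_limit {ι E : Type*} [NormedAddCommGroup E] [InnerProductSpace ℂ E]
    [CompleteSpace E] {u : ι → E} {C : ℝ} (hu : ∀ i, ‖u i‖ ≤ C) (𝒰 : Ultrafilter ι) :
    ∃ x : E, ∀ w : E, Tendsto (fun i => inner ℂ w (u i)) 𝒰 (𝓝 (inner ℂ w x)) := by
  let J : ι → WeakDual ℂ E := fun i =>
    StrongDual.toWeakDual (InnerProductSpace.toDual ℂ E (u i))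
  obtain ⟨ℓ, -, hℓ⟩ := (WeakDual.isCompact_closedBall (𝕜 := ℂ) (E := E) 0 C).ultrafilter_le_nhds
    (𝒰.map J) (by
      rw [le_principal_iff]
      refine Filter.mem_map.2 (univ_mem' fun i => ?_)
      simpa [J] using hu i)
  refine ⟨(InnerProductSpace.toDual ℂ E).symm (WeakDual.toStrongDual ℓ), fun w => ?_⟩
  have h1 : Tendsto (fun i => J i w) 𝒰 (𝓝 (ℓ w)) :=
    ((WeakDual.eval_continuous w).tendsto ℓ).comp (show Tendsto J 𝒰 (𝓝 ℓ) from hℓ)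
  have h2 := (Complex.continuous_conj.tendsto _).comp h1
  have h3 : inner ℂ w ((InnerProductSpace.toDual ℂ E).symm (WeakDual.toStrongDual ℓ))
      = (starRingEnd ℂ) (ℓ w) := by
    rw [← inner_conj_symm, InnerProductSpace.toDual_symm_apply]; rfl
  rw [h3]
  refine h2.congr fun i => ?_
  simp [J]

/-- The map `e ↦ ⟪Φ ·, e⟫` is a bounded operator from the Hilbert space to `C(S, ℂ)`, hence weakly
continuous, so it carries weak limits of `u` to weak limits of `F`. -/
theorem HilbertRep.weakUltraConv.{u} {ι S : Type u} [TopologicalSpace S] [CompactSpace S]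
    {F : ι → C(S, ℂ)} (hF : HilbertRep fun g s => F g s) : WeakUltraConv F := by
  obtain ⟨E, _, _, _, Φ, u, C, hΦ, hu, hc, hFe⟩ := hF
  intro 𝒰
  obtain ⟨x, hx⟩ := exists_weak_limit hu 𝒰
  let T₀ : E →ₗ[ℂ] C(S, ℂ) :=
    { toFun := fun e => ⟨fun s => inner ℂ (Φ s) e, hc e⟩
      map_add' := fun a b => by ext s; simp
      map_smul' := fun a b => by ext s; simp }
  let T : E →L[ℂ] C(S, ℂ) := T₀.mkContinuous (max C 0) fun e => by
    rw [ContinuousMap.norm_le _ (by positivity)]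
    intro s
    exact (norm_inner_le_norm _ _).trans
      (mul_le_mul_of_nonneg_right ((hΦ s).trans (le_max_left _ _)) (norm_nonneg _))
  have hT (g : ι) : T (u g) = F g := by ext s; exact (hFe g s).symm
  refine ⟨T x, fun L => ?_⟩
  have h := hx ((InnerProductSpace.toDual ℂ E).symm (L.comp T))
  simpa [InnerProductSpace.toDual_symm_apply, hT] using h

/-- The space `EuclideanSpace ℂ PUnit` is a copy of `ℂ` in the required universe. -/
theorem HilbertRep.const.{u} {ι S : Type u} [TopologicalSpace S] (c : ℂ) :
    HilbertRep fun (_ : ι) (_ : S) => c := by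
  refine ⟨EuclideanSpace ℂ PUnit.{u+1}, inferInstance, inferInstance, inferInstance,
    fun _ => WithLp.toLp 2 fun _ => 1, fun _ => WithLp.toLp 2 fun _ => c, max 1 ‖c‖, ?_, ?_, ?_, ?_⟩
  · intro; simp [EuclideanSpace.norm_eq]
  · intro; simp [EuclideanSpace.norm_eq]
  · intro; exact continuous_const
  · intros; simp [PiLp.inner_apply]

theorem HilbertRep.add.{u} {ι S : Type u} [TopologicalSpace S] {F₁ F₂ : ι → S → ℂ}
    (h₁ : HilbertRep F₁) (h₂ : HilbertRep F₂) : HilbertRep fun g s => F₁ g s + F₂ g s := by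
  obtain ⟨E₁, _, _, _, Φ₁, u₁, C₁, hΦ₁, hu₁, hc₁, hF₁⟩ := h₁
  obtain ⟨E₂, _, _, _, Φ₂, u₂, C₂, hΦ₂, hu₂, hc₂, hF₂⟩ := h₂
  have hb {a : E₁} {b : E₂} (ha : ‖a‖ ≤ C₁) (hb : ‖b‖ ≤ C₂) : ‖WithLp.toLp 2 (a, b)‖ ≤ C₁ + C₂ := by
    have h0 := norm_nonneg a
    have h1 := norm_nonneg b
    rw [WithLp.prod_norm_eq_of_L2]
    refine Real.sqrt_le_iff.2 ⟨by linarith, ?_⟩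
    change ‖a‖ ^ 2 + ‖b‖ ^ 2 ≤ _
    nlinarith
  refine ⟨WithLp 2 (E₁ × E₂), inferInstance, inferInstance, inferInstance,
    fun s => WithLp.toLp 2 (Φ₁ s, Φ₂ s), fun g => WithLp.toLp 2 (u₁ g, u₂ g), C₁ + C₂,
    fun s => hb (hΦ₁ s) (hΦ₂ s), fun g => hb (hu₁ g) (hu₂ g), fun e => ?_, fun g s => ?_⟩
  · simpa [WithLp.prod_inner_apply] using (hc₁ e.fst).fun_add (hc₂ e.snd)
  · simp [WithLp.prod_inner_apply, hF₁, hF₂]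

/-- The product is represented on the completed tensor product, by
`⟪Φ₁ s ⊗ Φ₂ s, u₁ g ⊗ u₂ g⟫ = ⟪Φ₁ s, u₁ g⟫ * ⟪Φ₂ s, u₂ g⟫`. -/
theorem HilbertRep.mul.{u} {ι S : Type u} [TopologicalSpace S] {F₁ F₂ : ι → S → ℂ}
    (h₁ : HilbertRep F₁) (h₂ : HilbertRep F₂) : HilbertRep fun g s => F₁ g s * F₂ g s := by
  obtain ⟨E₁, _, _, _, Φ₁, u₁, C₁, hΦ₁, hu₁, hc₁, hF₁⟩ := h₁
  obtain ⟨E₂, _, _, _, Φ₂, u₂, C₂, hΦ₂, hu₂, hc₂, hF₂⟩ := h₂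
  let j : E₁ ⊗[ℂ] E₂ → UniformSpace.Completion (E₁ ⊗[ℂ] E₂) := fun x => x
  have hb {a : E₁} {b : E₂} (ha : ‖a‖ ≤ C₁) (hb : ‖b‖ ≤ C₂) : ‖j (a ⊗ₜ b)‖ ≤ C₁ * C₂ := by
    simp only [j, UniformSpace.Completion.norm_coe, TensorProduct.norm_tmul]
    exact mul_le_mul ha hb (norm_nonneg _) ((norm_nonneg _).trans ha)
  refine ⟨UniformSpace.Completion (E₁ ⊗[ℂ] E₂), inferInstance, inferInstance, inferInstance,
    fun s => j (Φ₁ s ⊗ₜ Φ₂ s), fun g => j (u₁ g ⊗ₜ u₂ g), C₁ * C₂,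
    fun s => hb (hΦ₁ s) (hΦ₂ s), fun g => hb (hu₁ g) (hu₂ g), ?_, fun g s => ?_⟩
  · refine weaklyContinuous_of_dense (fun s => hb (hΦ₁ s) (hΦ₂ s))
      (t := {z | ∃ a b, j (a ⊗ₜ b) = z}) ?_ ?_
    · rw [← Submodule.dense_iff_topologicalClosure_eq_top]
      refine UniformSpace.Completion.denseRange_coe.mono ?_
      rintro _ ⟨z, rfl⟩
      have : z ∈ Submodule.span ℂ {t | ∃ a b, a ⊗ₜ b = t} := by
        rw [TensorProduct.span_tmul_eq_top]; trivial
      have h2 := Submodule.mem_map_of_mem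
        (f := (UniformSpace.Completion.toComplL (𝕜 := ℂ) (E := E₁ ⊗[ℂ] E₂)).toLinearMap) this
      rw [Submodule.map_span] at h2
      refine Submodule.span_mono ?_ h2
      rintro _ ⟨_, ⟨a, b, rfl⟩, rfl⟩
      exact ⟨a, b, rfl⟩
    · rintro _ ⟨a, b, rfl⟩
      simpa [j] using (hc₁ a).fun_mul (hc₂ b)
  · simp [j, hF₁, hF₂]

/-! ### The kernel `μ(xA ∩ yA)` and its Hilbert space -/

theorem LIFAPM.sum_fibers {G β : Type*} [Group G] (μ : LIFAPM G) (c : G → β) (s : Finset β)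
    (B : Set G) :
    μ.m (B ∩ {g | c g ∈ s}) = ∑ b ∈ s, μ.m (B ∩ {g | c g = b}) := by
  classical
  induction s using Finset.induction_on with
  | empty => simp [μ.empty]
  | insert b s hb ih =>
    rw [Finset.sum_insert hb, ← ih, ← μ.additive]
    · congr 1
      ext g
      simp only [Finset.mem_insert, Set.mem_inter_iff, Set.mem_ofPred_eq, Set.mem_union]
      tauto
    · rw [Set.disjoint_left]
      rintro g ⟨-, h1⟩ ⟨-, h2⟩
      simp only [Set.mem_ofPred_eq] at h1 h2
      exact hb (h1 ▸ h2)

/-- The kernel `(x, y) ↦ μ(xA ∩ yA)`, the formal inner product of the indicators of `xA`, `yA`. -/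
noncomputable def overlap {G : Type*} [Group G] (μ : LIFAPM G) (A : Set G) (x y : G) : ℝ :=
  μ.m ((fun a => x * a) '' A ∩ (fun a => y * a) '' A)

theorem overlap_comm {G : Type*} [Group G] (μ : LIFAPM G) (A : Set G) (x y : G) :
    overlap μ A x y = overlap μ A y x := by
  rw [overlap, overlap, Set.inter_comm]

theorem phiFn_inv_mul {G : Type*} [Group G] (μ : LIFAPM G) (A : Set G) (g x : G) :
    (phiFn μ A (g⁻¹ * x) : ℝ) = overlap μ A g x := by
  rw [phiFn, overlap]
  simp only
  rw [← μ.left_invariant g, Set.image_inter (mul_right_injective g), Set.image_image]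
  simp [mul_assoc]

/-- Positivity of `∫ |∑ x ∈ F, a x • 1_{xA}|² dμ`. The integrand is constant on the atoms of the
finite Boolean algebra generated by the translates `xA`, `x ∈ F`; the atom indexed by `T ⊆ F` is the
set of `g` lying in `xA` exactly for the `x ∈ T`. -/
theorem overlap_posSemidef {G : Type*} [Group G] (μ : LIFAPM G) (A : Set G) (F : Finset G)
    (a : G → ℂ) :
    0 ≤ (∑ x ∈ F, ∑ y ∈ F, (starRingEnd ℂ) (overlap μ A y x * a x) * a y).re := by
  classical
  let tr : G → Set G := fun x => (fun a => x * a) '' A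
  let c : G → Finset G := fun g => F.filter fun x => g ∈ tr x
  -- `c g` indexes the atom containing `g`, `w T` is the measure of the atom of `T`, and `b T` is the
  -- value of `∑ x ∈ F, a x • 1_{xA}` on it.
  let w : Finset G → ℝ := fun T => μ.m {g | c g = T}
  let b : Finset G → ℂ := fun T => ∑ x ∈ F, if x ∈ T then a x else 0
  have hk (x y : G) (hx : x ∈ F) (hy : y ∈ F) :
      overlap μ A y x = ∑ T ∈ F.powerset, if x ∈ T ∧ y ∈ T then w T else 0 := by
    have h1 : overlap μ A y x = μ.m ((tr y ∩ tr x) ∩ {g | c g ∈ F.powerset}) := by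
      have : {g | c g ∈ F.powerset} = Set.univ := by
        ext g; simp [c]
      rw [this, Set.inter_univ]; rfl
    rw [h1, μ.sum_fibers]
    refine Finset.sum_congr rfl fun T _ => ?_
    split_ifs with h
    · congr 1
      ext g
      simp only [Set.mem_inter_iff, Set.mem_ofPred_eq, and_iff_right_iff_imp]
      rintro rfl
      simp only [c, Finset.mem_filter] at h
      tauto
    · rw [← μ.empty]
      congr 1
      ext g
      simp only [Set.mem_inter_iff, Set.mem_ofPred_eq, Set.mem_empty_iff_false, iff_false]
      rintro ⟨⟨h1, h2⟩, rfl⟩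
      apply h
      simp only [c, Finset.mem_filter]
      tauto
  have key : ∑ x ∈ F, ∑ y ∈ F, (starRingEnd ℂ) (overlap μ A y x * a x) * a y =
      ∑ T ∈ F.powerset, (w T : ℂ) * ((starRingEnd ℂ) (b T) * b T) := by
    have h2 (T : Finset G) : (w T : ℂ) * ((starRingEnd ℂ) (b T) * b T) =
        ∑ x ∈ F, ∑ y ∈ F,
          if x ∈ T ∧ y ∈ T then (w T : ℂ) * ((starRingEnd ℂ) (a x) * a y) else 0 := by
      simp only [b, map_sum]
      rw [Finset.sum_mul_sum, Finset.mul_sum]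
      simp only [Finset.mul_sum]
      refine Finset.sum_congr rfl fun x _ => Finset.sum_congr rfl fun y _ => ?_
      by_cases hx : x ∈ T <;> by_cases hy : y ∈ T <;> simp [hx, hy]
    simp only [h2]
    rw [Finset.sum_comm (s := F.powerset)]
    refine Finset.sum_congr rfl fun x hx => ?_
    rw [Finset.sum_comm (s := F.powerset)]
    refine Finset.sum_congr rfl fun y hy => ?_
    rw [hk x y hx hy]
    push_cast
    simp only [map_mul, map_sum, Finset.sum_mul]
    refine Finset.sum_congr rfl fun T _ => ?_
    split_ifs <;> simp [mul_assoc]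
  rw [key, Complex.re_sum]
  refine Finset.sum_nonneg fun T _ => ?_
  rw [← Complex.normSq_eq_conj_mul_self, ← Complex.ofReal_mul, Complex.ofReal_re]
  exact mul_nonneg (μ.nonneg _) (Complex.normSq_nonneg _)

open scoped ComplexOrder in
/-- The reproducing kernel Hilbert space of `overlap μ A`, with its total family of kernel vectors. -/
theorem exists_overlap_vectors.{u} {G : Type u} [Group G] (μ : LIFAPM G) (A : Set G) :
    ∃ (E : Type u) (_ : NormedAddCommGroup E) (_ : InnerProductSpace ℂ E) (_ : CompleteSpace E)
      (v : G → E), (∀ x y, inner ℂ (v x) (v y) = (overlap μ A x y : ℂ)) ∧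
        (Submodule.span ℂ (Set.range v)).topologicalClosure = ⊤ := by
  let K : Matrix G G (ℂ →L[ℂ] ℂ) := .of fun x y => (overlap μ A x y : ℂ) • 1
  have hK : K.PosSemidef := by
    have htfae := (RKHS.posSemidef_tfae (K := K)).out 0 2
    refine htfae.2 ⟨?_, fun vv => ?_⟩
    · ext x y
      simp [K, Matrix.conjTranspose_apply, overlap_comm μ A x y]
    · have := overlap_posSemidef μ A vv.support vv
      convert this using 1
      simp only [Finsupp.sum]
      refine congrArg Complex.re
        (Finset.sum_congr rfl fun x _ => Finset.sum_congr rfl fun y _ => ?_)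
      simp [K, mul_comm]
  have : Fact K.PosSemidef := ⟨hK⟩
  refine ⟨RKHS.OfKernel K, inferInstance, inferInstance, inferInstance,
    fun x => RKHS.kerFun (RKHS.OfKernel K) x 1, fun x y => ?_, ?_⟩
  · rw [← RKHS.kernel_inner, RKHS.OfKernel.kernel_ofKernel]
    simp [K, overlap_comm μ A x y]
  · rw [eq_top_iff, ← RKHS.kerFun_dense (RKHS.OfKernel K)]
    refine Submodule.topologicalClosure_mono (Submodule.span_le.2 ?_)
    rintro _ ⟨x, z, rfl⟩
    have : RKHS.kerFun (RKHS.OfKernel K) x z = z • RKHS.kerFun (RKHS.OfKernel K) x 1 := by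
      rw [← map_smul]; simp
    rw [this]
    exact Submodule.smul_mem _ _ (Submodule.subset_span ⟨x, rfl⟩)

/-! ### The orbit closure as a weakly compact subset of a Hilbert space -/

/-- The coordinate function `s ↦ s(x)` on the orbit closure. -/
noncomputable def coordFn {G : Type*} [Group G] (μ : LIFAPM G) (A : Set G) (x : G) :
    C(orbClosure μ A, ℂ) :=
  ⟨fun s => ((s.1 x : ℝ) : ℂ), Complex.continuous_ofReal.comp (continuous_subtype_val.comp
    ((continuous_apply x).comp continuous_subtype_val))⟩

/-- The orbit closure embeds in the unit ball of a Hilbert space with its weak topology, its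
coordinates becoming inner products with fixed vectors `v y`. The translate of `φ` by `g` goes to
`v g`, and limits of such translates are reached by weak compactness of the ball. -/
theorem exists_weak_embedding.{u} {G : Type u} [Group G] (μ : LIFAPM G) (A : Set G) :
    ∃ (E : Type u) (_ : NormedAddCommGroup E) (_ : InnerProductSpace ℂ E) (_ : CompleteSpace E)
      (v : G → E) (Φ : orbClosure μ A → E), (∀ x, ‖v x‖ ≤ 1) ∧ (∀ s, ‖Φ s‖ ≤ 1) ∧
        (∀ e, Continuous fun s => inner ℂ (Φ s) e) ∧
        ∀ s y, ((s.1 y : ℝ) : ℂ) = inner ℂ (Φ s) (v y) := by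
  obtain ⟨E, _, _, _, v, hv, hdense⟩ := exists_overlap_vectors μ A
  have hv1 (x : G) : ‖v x‖ ≤ 1 := by
    have h := inner_self_eq_norm_sq_to_K (𝕜 := ℂ) (v x)
    rw [hv] at h
    have h2 : overlap μ A x x = ‖v x‖ ^ 2 := Complex.ofReal_injective (by simpa using h)
    have h3 : overlap μ A x x ≤ 1 := μ.le_one _
    have := norm_nonneg (v x)
    nlinarith
  have hex (s : orbClosure μ A) : ∃ e : E, ‖e‖ ≤ 1 ∧ ∀ y, ((s.1 y : ℝ) : ℂ) = inner ℂ e (v y) := by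
    let B : Set (WeakDual ℂ E) := WeakDual.toStrongDual ⁻¹' Metric.closedBall 0 1
    let ev : WeakDual ℂ E → G → ℂ := fun ℓ y => ℓ (v y)
    have hev : Continuous ev := continuous_pi fun y => WeakDual.eval_continuous (v y)
    have hcl : IsClosed (ev '' B) := ((WeakDual.isCompact_closedBall 0 1).image hev).isClosed
    let em : (G → Set.Icc (0 : ℝ) 1) → G → ℂ := fun ψ y => ((ψ y : ℝ) : ℂ)
    have hem : Continuous em := by fun_prop
    have hsub : orbClosure μ A ⊆ em ⁻¹' (ev '' B) := by
      refine closure_minimal ?_ (hcl.preimage hem)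
      rintro _ ⟨g, rfl⟩
      refine ⟨StrongDual.toWeakDual (InnerProductSpace.toDual ℂ E (v g)), ?_, ?_⟩
      · simpa [B] using hv1 g
      · funext y
        simp [ev, em, transAct, phiFn_inv_mul, hv]
    obtain ⟨ℓ, hℓ, he⟩ := hsub s.2
    refine ⟨(InnerProductSpace.toDual ℂ E).symm (WeakDual.toStrongDual ℓ), ?_, fun y => ?_⟩
    · simpa [B] using hℓ
    · rw [InnerProductSpace.toDual_symm_apply]
      exact (congrFun he y).symm
  choose Φ hΦ1 hΦ using hex
  refine ⟨E, _, _, ‹_›, v, Φ, hv1, hΦ1, weaklyContinuous_of_dense hΦ1 hdense ?_, hΦ⟩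
  rintro _ ⟨y, rfl⟩
  simp only [← hΦ]
  exact (coordFn μ A y).continuous

theorem hilbertRep_coordFn {G : Type*} [Group G] (μ : LIFAPM G) (A : Set G) (x : G) :
    HilbertRep fun (g : G) s => (coordFn μ A x).comp (transActSCM μ A g⁻¹) s := by
  obtain ⟨E, _, _, _, v, Φ, hv, hΦ, hc, h⟩ := exists_weak_embedding μ A
  refine ⟨E, _, _, ‹_›, Φ, fun g => v (g * x), 1, hΦ, fun g => hv _, hc, fun g s => ?_⟩
  rw [← h]
  simp [coordFn, transActSCM, transActS, transAct]

theorem separatesPoints_adjoin_coordFn {G : Type*} [Group G] (μ : LIFAPM G) (A : Set G) :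
    (StarAlgebra.adjoin ℂ (Set.range (coordFn μ A))).SeparatesPoints := by
  intro s t hst
  obtain ⟨x, hx⟩ : ∃ x, s.1 x ≠ t.1 x := by
    by_contra! hcon
    exact hst (Subtype.ext (funext hcon))
  refine ⟨coordFn μ A x, ⟨_, StarAlgebra.subset_adjoin ℂ _ ⟨x, rfl⟩, rfl⟩, ?_⟩
  intro h
  exact hx (Subtype.ext (Complex.ofReal_injective h))

/-- The orbit closure `S` of `φ(x) = μ(A ∩ xA)` in `[0,1]^G` is a weakly almost periodic
`G`-flow: the `G`-orbit `{ψ ↦ f (g⁻¹ • ψ) : g ∈ G}` of any `f ∈ C(S, ℂ)` is relatively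
compact in the weak topology on `C(S, ℂ)`. -/
theorem orbClosure_isWAPFlow (μ : LIFAPM G) (A : Set G) :
    ∀ f : C(orbClosure μ A, ℂ),
      IsCompact (closure ((toWeakSpace ℂ C(orbClosure μ A, ℂ)) ''
        (Set.range fun g : G => f.comp (transActSCM μ A g⁻¹)))) := by
  have hclosed := isClosed_weakUltraConv
    (fun (f : C(orbClosure μ A, ℂ)) (g : G) => f.comp (transActSCM μ A g⁻¹)) fun f f₂ g => by
      rw [ContinuousMap.norm_le _ (norm_nonneg _)]
      exact fun s => (f - f₂).norm_coe_le_norm _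
  -- The statement about `star f` makes the induction step for conjugation trivial; without it, a
  -- conjugate Hilbert space would be needed.
  let P : C(orbClosure μ A, ℂ) → Prop := fun f =>
    HilbertRep fun (g : G) s => f.comp (transActSCM μ A g⁻¹) s
  have halg (f) (hf : f ∈ StarAlgebra.adjoin ℂ (Set.range (coordFn μ A))) : P f ∧ P (star f) := by
    induction hf using StarAlgebra.adjoin_induction with
    | mem f hf =>
      obtain ⟨x, rfl⟩ := hf
      have hs : star (coordFn μ A x) = coordFn μ A x := by
        ext s; exact Complex.conj_ofReal _
      rw [hs]
      exact ⟨hilbertRep_coordFn μ A x, hilbertRep_coordFn μ A x⟩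
    | algebraMap r => exact ⟨HilbertRep.const r, HilbertRep.const (star r)⟩
    | add f f₂ _ _ h h₂ =>
      rw [star_add]
      exact ⟨h.1.add h₂.1, h.2.add h₂.2⟩
    | mul f f₂ _ _ h h₂ =>
      rw [star_mul']
      exact ⟨h.1.mul h₂.1, h.2.mul h₂.2⟩
    | star f _ h => rw [star_star]; exact ⟨h.2, h.1⟩
  intro f
  have hf : f ∈ (StarAlgebra.adjoin ℂ (Set.range (coordFn μ A))).topologicalClosure := by
    rw [ContinuousMap.starSubalgebra_topologicalClosure_eq_top_of_separatesPoints _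
      (separatesPoints_adjoin_coordFn μ A)]
    trivial
  exact WeakUltraConv.isCompact_closure
    (closure_minimal (fun f hf => (halg f hf).1.weakUltraConv) hclosed hf)
end

section
/- Let G be a group, μ a left-invariant finitely additive probability measure on G, and A ⊆ G. Define φ : G → [0,1] by φ(x) = μ(A ∩ xA). Then for any sequences (a_i)_{i=0}^∞ and (b_j)_{j=0}^∞ from G, one has lim_i lim_j φ(a_i⁻¹ b_j) = lim_j lim_i φ(a_i⁻¹ b_j) whenever both iterated limits exist. -/
/-!
By left invariance, `φ (a⁻¹ b) = μ (aA ∩ bA)`, which is the inner product of the indicator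
functions of `aA` and `bA` for the positive semidefinite form "integrate the product against `μ`".
So the theorem is an instance of the double limit property of a bounded pair of sequences `f`, `g`
in a (semi-)inner product space, `double_limit_of_posSemidef`.

To prove the latter, let `d n` be the infimum of `‖v‖²` over the convex hull `K n` of
`{f i | i ≥ n}`. The sequence `d` is monotone and bounded, hence Cauchy, so by the parallelogram law
near-minimisers `u ∈ K n` and `v ∈ K m` (with `n ≤ m` large) are close to each other. For fixed `u`
and large `j`, `⟪u, g j⟫` is close to `lim_i lim_j ⟪f i, g j⟫`; for that fixed `j` and large `m`,
`⟪v, g j⟫` is close to `lim_j lim_i ⟪f i, g j⟫`. Cauchy–Schwarz compares the two.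

The form lives on formal real combinations of subsets of `G`, so no integration theory for finitely
additive measures is needed; its positivity is `LIFAPM.quadratic_nonneg`.
-/


open Filter Topology

/-- Near-minimisers of the quadratic form of `B` over nested convex sets are close to each other:
the midpoint lies in the larger set, and the parallelogram law applies. -/
lemma parallelogram_near_min {V : Type*} [AddCommGroup V] [Module ℝ V]
    (B : LinearMap.BilinForm ℝ V) {K : Set V} (hK : Convex ℝ K) {d s t : ℝ}
    (hd : ∀ v ∈ K, d ≤ B v v) {u v : V} (hu : u ∈ K) (hv : v ∈ K)
    (hus : B u u ≤ s) (hvt : B v v ≤ t) : B (u - v) (u - v) ≤ 2 * s + 2 * t - 4 * d := by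
  have hmid : (1 / 2 : ℝ) • u + (1 / 2 : ℝ) • v ∈ K :=
    hK hu hv (by norm_num) (by norm_num) (by norm_num)
  have := hd _ hmid
  simp only [map_add, map_sub, map_smul, LinearMap.add_apply, LinearMap.sub_apply,
    LinearMap.smul_apply, smul_eq_mul] at this ⊢
  linarith

/-- The double limit property for bounded sequences with respect to a positive semidefinite
symmetric form. -/
theorem double_limit_of_posSemidef {V : Type*} [AddCommGroup V] [Module ℝ V]
    (B : LinearMap.BilinForm ℝ V) (hsymm : B.IsSymm) (hpos : ∀ v, 0 ≤ B v v)
    (f g : ℕ → V) (hf : ∀ i, B (f i) (f i) ≤ 1) (hg : ∀ j, B (g j) (g j) ≤ 1)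
    (c r : ℕ → ℝ) (La Lb : ℝ)
    (h1 : ∀ i, Tendsto (fun j => B (f i) (g j)) atTop (𝓝 (c i)))
    (h2 : Tendsto c atTop (𝓝 La))
    (h3 : ∀ j, Tendsto (fun i => B (f i) (g j)) atTop (𝓝 (r j)))
    (h4 : Tendsto r atTop (𝓝 Lb)) : La = Lb := by
  let K : ℕ → Set V := fun n => convexHull ℝ (f '' Set.Ici n)
  let d : ℕ → ℝ := fun n => sInf ((fun v => B v v) '' K n)
  have hKanti : Antitone K := fun n m h =>
    convexHull_mono (Set.image_mono (Set.Ici_subset_Ici.2 h))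
  have hfK : ∀ n, f n ∈ K n := fun n => subset_convexHull ℝ _ ⟨n, Set.self_mem_Ici, rfl⟩
  have hbdd : ∀ n, BddBelow ((fun v => B v v) '' K n) := fun n =>
    ⟨0, by rintro _ ⟨v, -, rfl⟩; exact hpos v⟩
  have hne : ∀ n, ((fun v => B v v) '' K n).Nonempty := fun n => ⟨_, f n, hfK n, rfl⟩
  have hdle : ∀ n, ∀ v ∈ K n, d n ≤ B v v := fun n v hv => csInf_le (hbdd n) ⟨v, hv, rfl⟩
  have hdmono : Monotone d := fun n m h =>
    csInf_le_csInf (hbdd n) (hne m) (Set.image_mono (hKanti h))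
  have hdbdd : BddAbove (Set.range d) :=
    ⟨1, by rintro _ ⟨n, rfl⟩; exact (hdle n _ (hfK n)).trans (hf n)⟩
  have hnear : ∀ n, ∀ ε > 0, ∃ v ∈ K n, B v v ≤ d n + ε := by
    intro n ε hε
    obtain ⟨_, ⟨v, hv, rfl⟩, h⟩ := exists_lt_of_csInf_lt (hne n) (lt_add_of_pos_right (d n) hε)
    exact ⟨v, hv, h.le⟩
  -- It suffices to bound `|La - Lb|` by `5 * δ` for every `δ > 0`.
  suffices H : ∀ δ > 0, |La - Lb| ≤ 5 * δ by
    by_contra hne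
    have hp : 0 < |La - Lb| := abs_pos.2 (sub_ne_zero.2 hne)
    linarith [H (|La - Lb| / 10) (by positivity)]
  intro δ hδ
  have hδ2 : 0 < δ ^ 2 := by positivity
  have hdlim := tendsto_atTop_ciSup hdmono hdbdd
  obtain ⟨N, hNd, hNc⟩ := ((hdlim.eventually (lt_mem_nhds (sub_lt_self _ hδ2))).and
    (eventually_forall_ge_atTop.2
      (h2.eventually (Ioo_mem_nhds (sub_lt_self La hδ) (lt_add_of_pos_right La hδ))))).exists
  obtain ⟨u, huK, hu⟩ := hnear N _ hδ2
  -- The property holds for each `f i`, `i ≥ N`, and it is preserved by convex combinations.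
  have hug : ∀ᶠ j in atTop, B u (g j) ∈ Set.Ioo (La - δ) (La + δ) := by
    have hconv : Convex ℝ {v | ∀ᶠ j in atTop, B v (g j) ∈ Set.Ioo (La - δ) (La + δ)} := by
      intro x hx y hy s t hs ht hst
      filter_upwards [hx, hy] with j hxj hyj
      simpa using convex_Ioo (La - δ) (La + δ) hxj hyj hs ht hst
    refine convexHull_min ?_ hconv huK
    rintro _ ⟨i, hi, rfl⟩
    exact (h1 i).eventually (isOpen_Ioo.mem_nhds (hNc i hi))
  obtain ⟨j, hju, hjr⟩ := (hug.and
    (h4.eventually (Ioo_mem_nhds (sub_lt_self Lb hδ) (lt_add_of_pos_right Lb hδ)))).exists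
  obtain ⟨m, hmf, hNm⟩ := ((eventually_forall_ge_atTop.2
    ((h3 j).eventually (isOpen_Ioo.mem_nhds hjr))).and (eventually_ge_atTop N)).exists
  obtain ⟨v, hvK, hv⟩ := hnear m _ hδ2
  have hvg : B v (g j) ∈ Set.Ioo (Lb - δ) (Lb + δ) := by
    have hconv : Convex ℝ {v | B v (g j) ∈ Set.Ioo (Lb - δ) (Lb + δ)} := by
      intro x hx y hy s t hs ht hst
      simpa using convex_Ioo (Lb - δ) (Lb + δ) hx hy hs ht hst
    refine convexHull_min ?_ hconv hvK
    rintro _ ⟨i, hi, rfl⟩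
    exact hmf i hi
  have huv := parallelogram_near_min B (convex_convexHull ℝ _) (hdle N) huK (hKanti hNm hvK) hu hv
  have hdm : d m ≤ ⨆ n, d n := le_ciSup hdbdd m
  have hcs := LinearMap.BilinForm.apply_sq_le_of_symm B hpos ⟨hsymm.eq⟩ (u - v) (g j)
  have hsq : (B (u - v) (g j)) ^ 2 ≤ (3 * δ) ^ 2 := by
    nlinarith [hpos (u - v), hg j, hpos (g j)]
  have habs := abs_le_of_sq_le_sq' hsq (by positivity)
  rw [map_sub, LinearMap.sub_apply] at habs
  obtain ⟨hju1, hju2⟩ := hju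
  obtain ⟨hvg1, hvg2⟩ := hvg
  rw [abs_le]
  constructor <;> linarith [habs.1, habs.2]

namespace LIFAPM

variable {G : Type*} [Group G] (μ : LIFAPM G)

lemma inter_add_diff (Z X : Set G) : μ.m (Z ∩ X) + μ.m (Z \ X) = μ.m Z := by
  rw [← μ.additive _ _ Set.disjoint_sdiff_inter.symm, Set.inter_union_sdiff]

/-- The expression is `∫_Z (x + ∑ X ∈ S, w X * 1_X)²`. Adding a set `P` to `S` amounts to replacing
`x` by `x + w P` on `Z ∩ P`, and changes nothing on `Z \ P`. -/
lemma quadratic_nonneg (w : Set G → ℝ) (S : Finset (Set G)) : ∀ (Z : Set G) (x : ℝ),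
    0 ≤ (∑ X ∈ S, ∑ Y ∈ S, w X * w Y * μ.m (Z ∩ (X ∩ Y)))
      + 2 * x * (∑ X ∈ S, w X * μ.m (Z ∩ X)) + x ^ 2 * μ.m Z := by
  classical
  induction S using Finset.induction_on with
  | empty =>
    intro Z x
    have := μ.nonneg Z
    simp only [Finset.sum_empty, mul_zero, zero_add]
    positivity
  | insert P S hP ih =>
    intro Z x
    have h1 := ih (Z ∩ P) (x + w P)
    have h2 := ih (Z \ P) x
    have e1 : ∀ X : Set G, μ.m (Z ∩ X) = μ.m (Z ∩ P ∩ X) + μ.m ((Z \ P) ∩ X) := fun X => by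
      rw [← μ.inter_add_diff (Z ∩ X) P, Set.inter_right_comm,
        show (Z ∩ X) \ P = (Z \ P) ∩ X by ext; simp; tauto]
    have e2 : ∀ X : Set G, μ.m (Z ∩ (P ∩ X)) = μ.m (Z ∩ P ∩ X) := fun X => by
      rw [Set.inter_assoc]
    have e3 : ∀ X : Set G, μ.m (Z ∩ (X ∩ P)) = μ.m (Z ∩ P ∩ X) := fun X => by
      rw [Set.inter_comm X, Set.inter_assoc]
    have t1 : ∑ X ∈ S, ∑ Y ∈ S, w X * w Y * μ.m (Z ∩ (X ∩ Y))
        = ∑ X ∈ S, ∑ Y ∈ S, w X * w Y * μ.m (Z ∩ P ∩ (X ∩ Y))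
          + ∑ X ∈ S, ∑ Y ∈ S, w X * w Y * μ.m ((Z \ P) ∩ (X ∩ Y)) := by
      simp only [← Finset.sum_add_distrib, ← mul_add, ← e1]
    have t2 : ∑ X ∈ S, w X * μ.m (Z ∩ X)
        = ∑ X ∈ S, w X * μ.m (Z ∩ P ∩ X) + ∑ X ∈ S, w X * μ.m ((Z \ P) ∩ X) := by
      simp only [← Finset.sum_add_distrib, ← mul_add, ← e1]
    have t3 : ∑ X ∈ S, w P * w X * μ.m (Z ∩ P ∩ X) = w P * ∑ X ∈ S, w X * μ.m (Z ∩ P ∩ X) := by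
      simp only [Finset.mul_sum, mul_assoc]
    have t4 : ∑ X ∈ S, w X * w P * μ.m (Z ∩ P ∩ X) = w P * ∑ X ∈ S, w X * μ.m (Z ∩ P ∩ X) := by
      rw [← t3]
      exact Finset.sum_congr rfl fun X _ => by ring
    simp only [Finset.sum_insert hP, Finset.sum_add_distrib, e2, e3, t3, t4, Set.inter_assoc Z P P,
      Set.inter_self]
    rw [t1, t2, ← μ.inter_add_diff Z P]
    linarith

/-- The bilinear form on formal real combinations of subsets of `G` with value `μ (X ∩ Y)` at
the pair `X, Y`: the integral of the product of the corresponding simple functions. -/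
noncomputable def form : LinearMap.BilinForm ℝ (Set G →₀ ℝ) :=
  Finsupp.linearCombination ℝ fun X =>
    Finsupp.linearCombination ℝ fun Y => μ.m (X ∩ Y)

lemma form_single (X Y : Set G) :
    μ.form (Finsupp.single X 1) (Finsupp.single Y 1) = μ.m (X ∩ Y) := by
  simp [form]

lemma form_apply (u v : Set G →₀ ℝ) :
    μ.form u v = ∑ X ∈ u.support, ∑ Y ∈ v.support, u X * v Y * μ.m (X ∩ Y) := by
  simp [form, Finsupp.linearCombination_apply, Finsupp.sum, Finset.mul_sum, mul_assoc]

lemma form_isSymm : μ.form.IsSymm := by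
  refine ⟨fun u v => ?_⟩
  simp only [form_apply]
  rw [Finset.sum_comm]
  refine Finset.sum_congr rfl fun X _ => Finset.sum_congr rfl fun Y _ => ?_
  rw [Set.inter_comm, mul_comm (u Y)]

lemma form_nonneg (u : Set G →₀ ℝ) : 0 ≤ μ.form u u := by
  simpa [form_apply] using μ.quadratic_nonneg u u.support Set.univ 0

lemma inter_translate (A : Set G) (g h : G) :
    μ.m (A ∩ (fun t => (g⁻¹ * h) * t) '' A)
      = μ.m ((fun t => g * t) '' A ∩ (fun t => h * t) '' A) := by
  rw [← μ.left_invariant g, Set.image_inter (mul_right_injective g), Set.image_image]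
  simp [mul_assoc]

end LIFAPM

/-- For `φ(x) = μ(A ∩ xA)`, the iterated limits `lim_i lim_j φ(a_i⁻¹ b_j)` and
`lim_j lim_i φ(a_i⁻¹ b_j)` agree whenever both exist. -/
theorem phi_double_limit {G : Type*} [Group G] (μ : LIFAPM G) (A : Set G)
    (a b : ℕ → G) (c r : ℕ → ℝ) (La Lb : ℝ)
    (h1 : ∀ i, Tendsto
      (fun j => μ.m (A ∩ (fun t => ((a i)⁻¹ * b j) * t) '' A)) atTop (𝓝 (c i)))
    (h2 : Tendsto c atTop (𝓝 La))
    (h3 : ∀ j, Tendsto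
      (fun i => μ.m (A ∩ (fun t => ((a i)⁻¹ * b j) * t) '' A)) atTop (𝓝 (r j)))
    (h4 : Tendsto r atTop (𝓝 Lb)) :
    La = Lb := by
  simp only [μ.inter_translate, ← μ.form_single] at h1 h3
  have hle : ∀ X : Set G, μ.form (Finsupp.single X 1) (Finsupp.single X 1) ≤ 1 := fun X => by
    rw [μ.form_single]
    exact μ.le_one _
  exact double_limit_of_posSemidef μ.form μ.form_isSymm μ.form_nonneg _ _
    (fun i => hle _) (fun j => hle _) c r La Lb h1 h2 h3 h4
end

section
/- Let G be a group, μ a left-invariant finitely additive probability measure on G, and A ⊆ G with μ(A) > 0. Fix a real number α with 0 ≤ α < μ(A)². Call a set F ⊆ G separated if μ(gA ∩ hA) ≤ α for all distinct g, h ∈ F. Then every finite separated set F satisfies |F| ≤ (μ(A) − α)/(μ(A)² − α), and consequently every separated subset of G is finite. -/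
theorem LIFAPM.m_preimage_finset {G : Type*} [Group G] (μ : LIFAPM G) {T : Type*}
    (f : G → T) (s : Finset T) :
    μ.m {x | f x ∈ s} = ∑ t ∈ s, μ.m {x | f x = t} := by
  classical
  induction s using Finset.induction_on with
  | empty => simpa using μ.empty
  | insert a s ha ih =>
    rw [Finset.sum_insert ha, ← ih, ← μ.additive]
    · congr 1
      ext x
      simp
    · rw [Set.disjoint_left]
      rintro x hx hxs
      simp only [Set.mem_ofPred_eq] at hx hxs
      exact ha (hx ▸ hxs)

/-- The Cauchy–Schwarz (second moment) inequality for a finitely additive probability measure. -/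
theorem LIFAPM.sq_sum_le {G : Type*} [Group G] (μ : LIFAPM G) {ι : Type*} (F : Finset ι)
    (E : ι → Set G) :
    (∑ g ∈ F, μ.m (E g)) ^ 2 ≤ ∑ g ∈ F, ∑ h ∈ F, μ.m (E g ∩ E h) := by
  classical
  let f : G → Finset ι := fun x => F.filter (fun g => x ∈ E g)
  -- `p S` is the mass of the atom with membership pattern `S`.
  let p : Finset ι → ℝ := fun S => μ.m {x | f x = S}
  have hf : ∀ x, f x ⊆ F := fun x => Finset.filter_subset _ _
  have h0 : ∑ S ∈ F.powerset, p S = 1 := by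
    rw [← μ.m_preimage_finset f, ← μ.univ]
    congr 1
    ext x
    simp [hf]
  have h2 : ∀ g ∈ F, ∀ h ∈ F,
      μ.m (E g ∩ E h) = ∑ S ∈ F.powerset, if g ∈ S ∧ h ∈ S then p S else 0 := by
    intro g hg h hh
    rw [← Finset.sum_filter, ← μ.m_preimage_finset f]
    congr 1
    ext x
    simp [f, hg, hh]
  have h1 : ∀ g ∈ F, μ.m (E g) = ∑ S ∈ F.powerset, if g ∈ S then p S else 0 := by
    intro g hg
    simpa using h2 g hg g hg
  have e1 : ∑ g ∈ F, μ.m (E g) = ∑ S ∈ F.powerset, (S.card : ℝ) * p S := by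
    rw [Finset.sum_congr rfl h1, Finset.sum_comm]
    refine Finset.sum_congr rfl fun S hS => ?_
    rw [← Finset.sum_filter, Finset.filter_mem_eq_inter,
      Finset.inter_eq_right.2 (Finset.mem_powerset.1 hS)]
    simp
  have e2 : ∑ g ∈ F, ∑ h ∈ F, μ.m (E g ∩ E h)
      = ∑ S ∈ F.powerset, (S.card : ℝ) ^ 2 * p S := by
    rw [← Finset.sum_product', Finset.sum_congr rfl (fun q hq =>
      h2 q.1 (Finset.mem_product.1 hq).1 q.2 (Finset.mem_product.1 hq).2), Finset.sum_comm]
    refine Finset.sum_congr rfl fun S hS => ?_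
    have hS' := Finset.mem_powerset.1 hS
    have : (F ×ˢ F).filter (fun q => q.1 ∈ S ∧ q.2 ∈ S) = S ×ˢ S := by
      ext q
      simp only [Finset.mem_filter, Finset.mem_product]
      exact ⟨fun h => h.2, fun h => ⟨⟨hS' h.1, hS' h.2⟩, h⟩⟩
    rw [← Finset.sum_filter, this]
    simp [Finset.card_product, sq]
  rw [e2, e1]
  obtain ⟨t, ht⟩ : ∃ t, t = ∑ S ∈ F.powerset, (S.card : ℝ) * p S := ⟨_, rfl⟩
  rw [← ht]
  have hvar : 0 ≤ ∑ S ∈ F.powerset, ((S.card : ℝ) - t) ^ 2 * p S :=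
    Finset.sum_nonneg fun S _ => mul_nonneg (sq_nonneg _) (μ.nonneg _)
  have hexp : ∑ S ∈ F.powerset, ((S.card : ℝ) - t) ^ 2 * p S
      = ∑ S ∈ F.powerset, (S.card : ℝ) ^ 2 * p S
        - 2 * t * ∑ S ∈ F.powerset, (S.card : ℝ) * p S + t ^ 2 * ∑ S ∈ F.powerset, p S := by
    rw [Finset.mul_sum, Finset.mul_sum, ← Finset.sum_sub_distrib, ← Finset.sum_add_distrib]
    exact Finset.sum_congr rfl fun S _ => by ring
  rw [hexp, h0, ← ht] at hvar
  linarith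

/-- Let `μ(A) > 0` and `0 ≤ α < μ(A)²`. Call `F ⊆ G` separated if `μ(gA ∩ hA) ≤ α` for all
distinct `g, h ∈ F`. Then every finite separated set has at most `(μ(A) - α)/(μ(A)² - α)`
elements, and consequently every separated subset of `G` is finite. -/
theorem separated_sets_finite {G : Type*} [Group G] (μ : LIFAPM G) (A : Set G)
    (hA : 0 < μ.m A) (α : ℝ) (hα0 : 0 ≤ α) (hα : α < μ.m A ^ 2) :
    (∀ F : Finset G,
      (∀ g ∈ F, ∀ h ∈ F, g ≠ h →
        μ.m ((fun x => g * x) '' A ∩ (fun x => h * x) '' A) ≤ α) →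
      (F.card : ℝ) ≤ (μ.m A - α) / (μ.m A ^ 2 - α)) ∧
    (∀ F : Set G,
      (∀ g ∈ F, ∀ h ∈ F, g ≠ h →
        μ.m ((fun x => g * x) '' A ∩ (fun x => h * x) '' A) ≤ α) →
      F.Finite) := by
  classical
  have key : ∀ F : Finset G,
      (∀ g ∈ F, ∀ h ∈ F, g ≠ h →
        μ.m ((fun x => g * x) '' A ∩ (fun x => h * x) '' A) ≤ α) →
      (F.card : ℝ) ≤ (μ.m A - α) / (μ.m A ^ 2 - α) := by
    intro F hF
    rw [le_div_iff₀ (by linarith)]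
    rcases F.eq_empty_or_nonempty with rfl | hne
    · have := μ.le_one A
      simp only [Finset.card_empty, Nat.cast_zero, zero_mul]
      nlinarith
    have hn : (0 : ℝ) < F.card := by exact_mod_cast hne.card_pos
    have hcs := μ.sq_sum_le F (fun g => (fun x => g * x) '' A)
    simp only [μ.left_invariant, Finset.sum_const, nsmul_eq_mul] at hcs
    have hub : ∑ g ∈ F, ∑ h ∈ F, μ.m ((fun x => g * x) '' A ∩ (fun x => h * x) '' A)
        ≤ F.card * (F.card * α + (μ.m A - α)) := by
      rw [← nsmul_eq_mul]
      refine Finset.sum_le_card_nsmul _ _ _ fun g hg => ?_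
      calc ∑ h ∈ F, μ.m ((fun x => g * x) '' A ∩ (fun x => h * x) '' A)
          ≤ ∑ h ∈ F, (α + if g = h then μ.m A - α else 0) := by
            refine Finset.sum_le_sum fun h hh => ?_
            split_ifs with hgh
            · subst hgh
              rw [Set.inter_self, μ.left_invariant]
              linarith
            · simpa using hF g hg h hh hgh
        _ = F.card * α + (μ.m A - α) := by
            simp [Finset.sum_add_distrib, hg]
    have h3 : (F.card : ℝ) * (F.card * μ.m A ^ 2)
        ≤ F.card * (F.card * α + (μ.m A - α)) := by linarith [hcs.trans hub]
    have h4 := le_of_mul_le_mul_left h3 hn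
    linarith
  refine ⟨key, fun F hF => ?_⟩
  by_contra hinf
  obtain ⟨n, hn⟩ := exists_nat_gt ((μ.m A - α) / (μ.m A ^ 2 - α))
  obtain ⟨t, htF, htn⟩ := Set.Infinite.exists_subset_card_eq (s := F) hinf n
  have := key t fun g hg h hh => hF g (htF hg) h (htF hh)
  rw [htn] at this
  linarith
end

section
/- Let G be a group and A ⊆ G, and suppose there exists a left-invariant finitely additive probability measure μ on G with μ(A) > 0. Then AA⁻¹ = {ab⁻¹ : a, b ∈ A} is syndetic in G, i.e., G = ⋃_{g∈F} g·AA⁻¹ for some finite F ⊆ G. -/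
/-!
If finitely many left translates of `A` are pairwise disjoint, invariance and additivity give
their union measure `n * μ(A) ≤ 1`, so `n` is bounded. On the other hand, `x ∉ F * (A * A⁻¹)`
says exactly that `x * A` is disjoint from `g * A` for every `g ∈ F`. Hence if `A * A⁻¹` were not
syndetic, a disjoint family of translates could always be extended, contradicting the bound.
-/

open Pointwise

/-- If `A` has positive upper Banach density in the amenable group `G`, then `AA⁻¹` is
syndetic in `G`. -/
theorem diff_set_syndetic {G : Type*} [Group G] (A : Set G)
    (hA : ∃ μ : LIFAPM G, 0 < μ.m A) :
    ∃ F : Finset G, (⋃ g ∈ F, (fun x => g * x) '' (A * A⁻¹)) = Set.univ := by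
  obtain ⟨μ, hμ⟩ := hA
  by_contra! hcon
  have key : ∀ n : ℕ, ∃ F : Finset G,
      μ.m (⋃ g ∈ F, (fun x => g * x) '' A) = n * μ.m A := by
    classical
    intro n
    induction n with
    | zero => exact ⟨∅, by simp [μ.empty]⟩
    | succ n ih =>
      obtain ⟨F, hF⟩ := ih
      obtain ⟨x, hx⟩ := (Set.ne_univ_iff_exists_notMem _).1 (hcon F)
      refine ⟨insert x F, ?_⟩
      rw [Finset.set_biUnion_insert, μ.additive, μ.left_invariant, hF]
      · push_cast
        ring
      · rw [Set.disjoint_left]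
        rintro _ ⟨a, ha, rfl⟩ hmem
        simp only [Set.mem_iUnion] at hmem
        obtain ⟨g, hg, b, hb, hab⟩ := hmem
        apply hx
        simp only [Set.mem_iUnion]
        -- `g * b = x * a` gives `x = g * (b * a⁻¹)`.
        refine ⟨g, hg, b * a⁻¹, Set.mul_mem_mul hb (Set.inv_mem_inv.2 ha), ?_⟩
        simp only at hab ⊢
        rw [← mul_assoc, hab, mul_inv_cancel_right]
  obtain ⟨n, hn⟩ := exists_nat_gt (1 / μ.m A)
  obtain ⟨F, hF⟩ := key n
  have hle := μ.le_one (⋃ g ∈ F, (fun x => g * x) '' A)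
  rw [hF] at hle
  rw [div_lt_iff₀ hμ] at hn
  linarith
end

section
/- Let G be an amenable group (there exists at least one left-invariant finitely additive probability measure on G), and let X, Y ⊆ G. Suppose X is syndetic and ν(X \ Y) = 0 for every left-invariant finitely additive probability measure ν on G (i.e., BD(X \ Y) = 0). Then Y is syndetic. -/
/-- The convolution `μ * p` of a left-invariant measure with an ultrafilter on the group. -/
noncomputable def LIFAPM.conv {G : Type*} [Group G] (μ : LIFAPM G) (p : Ultrafilter G) :
    LIFAPM G where
  m A := μ.m {g | {t | g * t ∈ A} ∈ p}
  nonneg _ := μ.nonneg _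
  le_one _ := μ.le_one _
  empty := by
    convert μ.empty using 2
    ext g
    simp
  univ := by
    convert μ.univ using 2
    ext g
    simp [← Ultrafilter.mem_coe]
  additive A B hAB := by
    rw [← μ.additive]
    · congr 1
      ext g
      -- An ultrafilter contains a union iff it contains one of the two sets.
      exact Ultrafilter.union_mem_iff (f := p) (s := {t | g * t ∈ A}) (t := {t | g * t ∈ B})
    · rw [Set.disjoint_left]
      intro g hA hB
      obtain ⟨t, htA, htB⟩ := p.nonempty_of_mem (Filter.inter_mem hA hB)
      exact Set.disjoint_left.1 hAB htA htB
  left_invariant h A := by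
    rw [← μ.left_invariant h {g | {t | g * t ∈ A} ∈ p}]
    congr 1
    ext g
    simp [Set.image_mul_left, mul_assoc]

namespace LIFAPM

variable {G : Type*} [Group G] (ν : LIFAPM G)

lemma mono {A B : Set G} (h : A ⊆ B) : ν.m A ≤ ν.m B := by
  have h1 := ν.additive A (B \ A) Set.disjoint_sdiff_right
  rw [Set.union_sdiff_cancel h] at h1
  linarith [ν.nonneg (B \ A)]

lemma union_null {A B : Set G} (hA : ν.m A = 0) (hB : ν.m B = 0) : ν.m (A ∪ B) = 0 := by
  have h1 := ν.additive A (B \ A) Set.disjoint_sdiff_right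
  rw [Set.union_sdiff_self] at h1
  linarith [ν.nonneg (A ∪ B), ν.mono (Set.sdiff_subset : B \ A ⊆ B)]

lemma biUnion_null {A : Set G} (hA : ν.m A = 0) (F : Finset G) :
    ν.m (⋃ g ∈ F, (fun x => g * x) '' A) = 0 := by
  classical
  induction F using Finset.induction_on with
  | empty => simpa using ν.empty
  | insert a s _ ih =>
    rw [Finset.set_biUnion_insert]
    exact ν.union_null (by rw [ν.left_invariant, hA]) ih

end LIFAPM

/-- Thickness of the complement of a non-syndetic set `Y`, in ultrafilter form: every left
translate of some ultrafilter `p` contains the complement of `Y`. -/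
lemma exists_ultrafilter_of_not_syndetic {G : Type*} [Group G] {Y : Set G}
    (hY : ¬ ∃ F : Finset G, (⋃ g ∈ F, (fun x => g * x) '' Y) = Set.univ) :
    ∃ p : Ultrafilter G, ∀ g : G, {t | g * t ∈ Y} ∉ p := by
  classical
  have h : ∀ F : Finset G, ∃ t, ∀ g ∈ F, g⁻¹ * t ∉ Y := by
    intro F
    by_contra! hF
    refine hY ⟨F, Set.eq_univ_of_forall fun t => ?_⟩
    obtain ⟨g, hg, hgt⟩ := hF t
    exact Set.mem_biUnion hg ⟨g⁻¹ * t, hgt, by simp⟩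
  choose t ht using h
  refine ⟨(Ultrafilter.of Filter.atTop).map t, fun g => ?_⟩
  rw [← Ultrafilter.compl_mem_iff_notMem, Ultrafilter.mem_map]
  refine Ultrafilter.of_le _ ?_
  filter_upwards [Filter.eventually_ge_atTop ({g⁻¹} : Finset G)] with F hF
  simpa using ht F g⁻¹ (hF (Finset.mem_singleton_self _))

/-- Let `G` be amenable, `X, Y ⊆ G`. If `X` is syndetic and `BD(X \ Y) = 0` (i.e.,
`ν(X \ Y) = 0` for every left-invariant finitely additive probability measure `ν`), then `Y`
is syndetic. -/
theorem syndetic_of_almost_contained {G : Type*} [Group G]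
    (hamen : Nonempty (LIFAPM G)) (X Y : Set G)
    (hX : ∃ F : Finset G, (⋃ g ∈ F, (fun x => g * x) '' X) = Set.univ)
    (hXY : ∀ ν : LIFAPM G, ν.m (X \ Y) = 0) :
    ∃ F : Finset G, (⋃ g ∈ F, (fun x => g * x) '' Y) = Set.univ := by
  by_contra hY
  obtain ⟨p, hp⟩ := exists_ultrafilter_of_not_syndetic hY
  obtain ⟨μ⟩ := hamen
  obtain ⟨F, hF⟩ := hX
  have hνY : (μ.conv p).m Y = 0 := by
    change μ.m {g | {t | g * t ∈ Y} ∈ p} = 0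
    rw [← μ.empty]
    congr 1
    exact Set.eq_empty_of_forall_notMem hp
  have hνX : (μ.conv p).m X = 0 := by
    refine le_antisymm ?_ ((μ.conv p).nonneg X)
    rw [← (μ.conv p).union_null (hXY (μ.conv p)) hνY]
    refine (μ.conv p).mono ?_
    rw [Set.sdiff_union_self]
    exact Set.subset_union_left
  have h0 := (μ.conv p).biUnion_null hνX F
  rw [hF, (μ.conv p).univ] at h0
  exact one_ne_zero h0
end
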